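/- arXiv:2406.00705 — 3 statements merged into one kernel-verified Lean document; each statement's English description precedes it below -/
import Mathlib

section
/- Let H be a real Hilbert space, t0 > 0, and let ξ, M1 be positive constants with ξ < 1/3. Let y : [t0,∞) → H be differentiable and let g : H → ℝ be a convex continuous function such that g(y(t) + ξ t y'(t)) ≤ M1/t³ for all t ≥ t0. Then there exists a positive constant C such that g(y(t)) ≤ C/t³ for all t ≥ t0. -/
open Filter Topology InnerProductSpace

/-!
If `z = y + α y'` with `α ≥ 0`, then `y` always moves towards `z`, so a closed convex set which
contains `y t₀` and all the values of `z` contains the whole curve `y`: a continuous linear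
functional that separates `y t` from the set would have to decrease whenever it reaches the
separating level. Applied to the curve `(y, φ)` and the epigraph of `g`, this is a comparison
principle: `g (y + α y') ≤ φ + α φ'` and `g (y t₀) ≤ φ t₀` imply `g ∘ y ≤ φ`. For `α t = ξ t` and
`φ t = C / t ^ p` the right-hand side is `C (1 - ξ p) / t ^ p`, so when `ξ p < 1` a large `C` works.
-/

open Set

section Comparison

variable {E : Type*} [NormedAddCommGroup E] [NormedSpace ℝ E]
  {s : Set E} {g : E → ℝ} {y y' : ℝ → E} {α : ℝ → ℝ} {a b : ℝ}

theorem mapsTo_Icc_of_add_smul_deriv_right_mem (hs : Convex ℝ s) (hsc : IsClosed s)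
    (hy : ContinuousOn y (Icc a b)) (hy' : ∀ t ∈ Ico a b, HasDerivWithinAt y (y' t) (Ici t) t)
    (hα : ∀ t ∈ Ico a b, 0 ≤ α t) (ha : y a ∈ s)
    (hmem : ∀ t ∈ Ico a b, y t + α t • y' t ∈ s) :
    MapsTo y (Icc a b) s := by
  intro t ht
  by_contra hts
  obtain ⟨l, c, hlt, hgt⟩ := geometric_hahn_banach_closed_point hs hsc hts
  have hdecr : ∀ r ∈ Ico a b, l (y r) = c → l (y' r) < 0 := by
    intro r hr hrc
    have hlr : l (y r) + α r * l (y' r) < c := by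
      simpa only [map_add, map_smul, smul_eq_mul] using hlt _ (hmem r hr)
    exact neg_of_mul_neg_right (by linarith) (hα r hr)
  have hle : l (y t) ≤ c :=
    image_le_of_deriv_right_lt_deriv_boundary' (l.continuous.comp_continuousOn hy)
      (fun r hr ↦ l.hasFDerivAt.comp_hasDerivWithinAt r (hy' r hr)) (hlt _ ha).le
      continuousOn_const (fun r _ ↦ hasDerivWithinAt_const r _ c) hdecr ht
  exact hle.not_gt hgt

theorem convexOn_comp_le_of_add_smul_deriv_right_le {φ φ' : ℝ → ℝ}
    (hg : ConvexOn ℝ s g) (hgc : LowerSemicontinuousOn g s) (hsc : IsClosed s)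
    (hy : ContinuousOn y (Icc a b)) (hy' : ∀ t ∈ Ico a b, HasDerivWithinAt y (y' t) (Ici t) t)
    (hφ : ContinuousOn φ (Icc a b)) (hφ' : ∀ t ∈ Ico a b, HasDerivWithinAt φ (φ' t) (Ici t) t)
    (hα : ∀ t ∈ Ico a b, 0 ≤ α t) (ha : y a ∈ s) (hga : g (y a) ≤ φ a)
    (hmem : ∀ t ∈ Ico a b, y t + α t • y' t ∈ s)
    (hle : ∀ t ∈ Ico a b, g (y t + α t • y' t) ≤ φ t + α t * φ' t) :
    ∀ t ∈ Icc a b, y t ∈ s ∧ g (y t) ≤ φ t :=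
  mapsTo_Icc_of_add_smul_deriv_right_mem hg.convex_epigraph (hgc.isClosed_re_epigraph (𝕜 := ℝ) hsc)
    (hy.prodMk hφ) (fun t ht ↦ (hy' t ht).prodMk (hφ' t ht)) hα ⟨ha, hga⟩
    fun t ht ↦ ⟨hmem t ht, hle t ht⟩

end Comparison

section PowerDecay

theorem hasDerivAt_const_div_rpow (C p : ℝ) {t : ℝ} (ht : 0 < t) :
    HasDerivAt (fun r ↦ C / r ^ p) (-(p * (C / t ^ p)) / t) t := by
  have hderiv : C * (-p * t ^ (-p - 1)) = -(p * (C / t ^ p)) / t := by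
    rw [Real.rpow_sub_one ht.ne', Real.rpow_neg ht.le]
    ring
  rw [← hderiv]
  refine ((Real.hasDerivAt_rpow_const (Or.inl ht.ne')).const_mul C).congr_of_eventuallyEq ?_
  filter_upwards [lt_mem_nhds ht] with r hr
  rw [Real.rpow_neg hr.le, div_eq_mul_inv]

variable {E : Type*} [NormedAddCommGroup E] [NormedSpace ℝ E]
  {s : Set E} {g : E → ℝ} {y y' : ℝ → E} {t₀ ξ M p : ℝ}

theorem convexOn_comp_le_div_rpow {C : ℝ} (ht₀ : 0 < t₀) (hξ : 0 ≤ ξ)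
    (hy : ContinuousOn y (Ici t₀)) (hy' : ∀ t, t₀ ≤ t → HasDerivWithinAt y (y' t) (Ici t) t)
    (hg : ConvexOn ℝ s g) (hgc : LowerSemicontinuousOn g s) (hsc : IsClosed s) (hys : y t₀ ∈ s)
    (hmem : ∀ t, t₀ ≤ t → y t + (ξ * t) • y' t ∈ s)
    (hbound : ∀ t, t₀ ≤ t → g (y t + (ξ * t) • y' t) ≤ M / t ^ p)
    (hC₀ : g (y t₀) ≤ C / t₀ ^ p) (hMC : M ≤ C * (1 - ξ * p)) {t : ℝ} (ht : t₀ ≤ t) :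
    y t ∈ s ∧ g (y t) ≤ C / t ^ p := by
  have hpos : ∀ {r}, t₀ ≤ r → 0 < r := ht₀.trans_le
  have hsuper : ∀ r ∈ Ico t₀ t, g (y r + (ξ * r) • y' r) ≤
      C / r ^ p + ξ * r * (-(p * (C / r ^ p)) / r) := by
    intro r hr
    have hr₀ := hpos hr.1
    calc g (y r + (ξ * r) • y' r) ≤ M / r ^ p := hbound r hr.1
      _ ≤ C * (1 - ξ * p) / r ^ p := by gcongr
      _ = C / r ^ p + ξ * r * (-(p * (C / r ^ p)) / r) := by field_simp; ring
  exact convexOn_comp_le_of_add_smul_deriv_right_le hg hgc hsc (hy.mono Icc_subset_Ici_self)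
    (fun r hr ↦ hy' r hr.1)
    (fun r hr ↦ (hasDerivAt_const_div_rpow C p (hpos hr.1)).continuousAt.continuousWithinAt)
    (fun r hr ↦ (hasDerivAt_const_div_rpow C p (hpos hr.1)).hasDerivWithinAt)
    (fun r hr ↦ mul_nonneg hξ (hpos hr.1).le) hys hC₀ (fun r hr ↦ hmem r hr.1) hsuper
    t (right_mem_Icc.2 ht)

theorem stmt1_general (ht₀ : 0 < t₀) (hξ : 0 ≤ ξ) (hξp : ξ * p < 1)
    (hy : ContinuousOn y (Ici t₀)) (hy' : ∀ t, t₀ ≤ t → HasDerivWithinAt y (y' t) (Ici t) t)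
    (hg : ConvexOn ℝ s g) (hgc : LowerSemicontinuousOn g s) (hsc : IsClosed s) (hys : y t₀ ∈ s)
    (hmem : ∀ t, t₀ ≤ t → y t + (ξ * t) • y' t ∈ s)
    (hbound : ∀ t, t₀ ≤ t → g (y t + (ξ * t) • y' t) ≤ M / t ^ p) :
    ∃ C : ℝ, 0 < C ∧ ∀ t, t₀ ≤ t → y t ∈ s ∧ g (y t) ≤ C / t ^ p := by
  obtain ⟨C, hC, hC₀, hMC⟩ : ∃ C : ℝ, 0 < C ∧ g (y t₀) * t₀ ^ p ≤ C ∧ M / (1 - ξ * p) ≤ C :=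
    ((eventually_gt_atTop 0).and ((eventually_ge_atTop _).and (eventually_ge_atTop _))).exists
  exact ⟨C, hC, fun t ht ↦ convexOn_comp_le_div_rpow ht₀ hξ hy hy' hg hgc hsc hys hmem hbound
    ((le_div_iff₀ (Real.rpow_pos_of_pos ht₀ p)).2 hC₀) ((div_le_iff₀ (sub_pos.2 hξp)).1 hMC) ht⟩

end PowerDecay

theorem stmt1
    {H : Type*} [NormedAddCommGroup H] [InnerProductSpace ℝ H] [CompleteSpace H]
    (t0 ξ M1 : ℝ) (ht0 : 0 < t0) (hξ : 0 < ξ) (hξ' : ξ < 1 / 3) (hM1 : 0 < M1)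
    (y : ℝ → H) (hy : ∀ t, t0 ≤ t → DifferentiableAt ℝ y t)
    (g : H → ℝ) (hgconv : ConvexOn ℝ Set.univ g) (hgcont : Continuous g)
    (hbound : ∀ t, t0 ≤ t → g (y t + (ξ * t) • deriv y t) ≤ M1 / t ^ 3) :
    ∃ C : ℝ, 0 < C ∧ ∀ t, t0 ≤ t → g (y t) ≤ C / t ^ 3 := by
  simpa using stmt1_general (p := 3) ht0 hξ.le (by linarith)
    (fun t ht ↦ (hy t ht).continuousAt.continuousWithinAt)
    (fun t ht ↦ (hy t ht).hasDerivAt.hasDerivWithinAt) hgconv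
    (hgcont.lowerSemicontinuous.lowerSemicontinuousOn _) isClosed_univ (mem_univ _)
    (fun _ _ ↦ mem_univ _) (by simpa using hbound)
end

section
/- Under the stated assumptions on U, the coefficient functions, the function D and the constants δ1,…,δ6 (in particular 1/c1 < δ5 − δ4²/δ3), every strong global solution x of the system x'''(t) + β2(t)x''(t) + β1(t)x'(t) + β0(t)U(φ_x(t)) = 0 satisfies: x, x' and x'' are bounded on [t0,∞), and the functions x', x'', x''' and t ↦ U(x(t)) all belong to L²([t0,∞); H). -/
open MeasureTheory Filter Topology InnerProductSpace

/-- A function `h : ℝ → H` is locally absolutely continuous on `[t0, ∞)` if on each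
interval `[t0, t]` it is the integral of a locally integrable function plus its
initial value. -/
def LocallyAbsolutelyContinuousFrom {H : Type*} [NormedAddCommGroup H] [NormedSpace ℝ H]
    (t0 : ℝ) (h : ℝ → H) : Prop :=
  ∃ g : ℝ → H, (∀ t, t0 ≤ t → IntervalIntegrable g MeasureTheory.volume t0 t) ∧
    ∀ t, t0 ≤ t → h t = h t0 + ∫ s in t0..t, g s

/-- `x` is a strong global solution of the third-order dynamical system
`x'''(t) + β2(t)x''(t) + β1(t)x'(t) + β0(t) U(x(t) + λ1(t)x'(t) + λ2(t)x''(t)) = 0`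
on `[t0, ∞)`. -/
def IsStrongGlobalSolution {H : Type*} [NormedAddCommGroup H] [NormedSpace ℝ H]
    (t0 : ℝ) (β0 β1 β2 lam1 lam2 : ℝ → ℝ) (U : H → H) (x : ℝ → H) : Prop :=
  LocallyAbsolutelyContinuousFrom t0 x ∧
  LocallyAbsolutelyContinuousFrom t0 (deriv x) ∧
  LocallyAbsolutelyContinuousFrom t0 (deriv (deriv x)) ∧
  ∀ᵐ t ∂(MeasureTheory.volume), t0 ≤ t →
    deriv (deriv (deriv x)) t + β2 t • deriv (deriv x) t + β1 t • deriv x t +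
      β0 t • U (x t + lam1 t • deriv x t + lam2 t • deriv (deriv x) t) = 0

/-! Put `X = x - z` with `z` a zero of `U`. Expanding `β0 U(φ) = -(x''' + β2 x'' + β1 x')` in the
quasi-cocoercivity inequality at `φ` yields a quadratic inequality in `X, x', x'', x'''`. Its
indefinite cross terms are, up to terms of favourable sign, total derivatives, because the
coefficients `A2 = C0 β1` and `B1 = C0 β2` are products of nonnegative decreasing convex functions
and `A1` is decreasing. Hence a quadratic Lyapunov function `E` satisfies
`E' ≤ -(δ1 ‖x'‖² + δ2 ‖x''‖² + δ6 ‖x'''‖²)`. The gap condition `1 / c1 < δ5 - δ4² / δ3` makes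
`E - β2 (‖X‖²)'` coercive, so `p = ‖X‖²` satisfies `β2 p' + ε p ≤ E t0`, which bounds `p`, then `E`
from below, and finally the dissipated energy. -/

section LocallyAbsolutelyContinuous

variable {H : Type*} [NormedAddCommGroup H] [NormedSpace ℝ H] {t0 : ℝ} {h : ℝ → H}

lemma LocallyAbsolutelyContinuousFrom.continuousOn
    (hh : LocallyAbsolutelyContinuousFrom t0 h) : ContinuousOn h (Set.Ici t0) := by
  obtain ⟨g, hg, hhg⟩ := hh
  intro t (ht : t0 ≤ t)
  have hprim := intervalIntegral.continuousOn_primitive_interval' (hg (t + 1) (by linarith))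
    Set.left_mem_uIcc
  rw [Set.uIcc_of_le (by linarith)] at hprim
  have hIcc : ContinuousWithinAt h (Set.Icc t0 (t + 1)) t :=
    ((hprim t ⟨ht, by linarith⟩).const_add (h t0)).congr (fun y hy => hhg y hy.1) (hhg t ht)
  exact hIcc.mono_of_mem_nhdsWithin (mem_nhdsWithin.2
    ⟨Set.Iio (t + 1), isOpen_Iio, lt_add_one t, fun y hy => ⟨hy.2, hy.1.le⟩⟩)

variable [CompleteSpace H] {f : ℝ → H}

lemma LocallyAbsolutelyContinuousFrom.eq_add_integral_of_ae_deriv_eq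
    (hh : LocallyAbsolutelyContinuousFrom t0 h) (hae : ∀ᵐ t, t0 ≤ t → deriv h t = f t)
    {t : ℝ} (ht : t0 ≤ t) : h t = h t0 + ∫ s in t0..t, f s := by
  obtain ⟨g, hg, hhg⟩ := hh
  rw [hhg t ht]
  congr 1
  apply intervalIntegral.integral_congr_ae
  filter_upwards [(hg t ht).ae_hasDerivAt_integral, hae] with s hprim hderiv hs
  rw [Set.uIoc_of_le ht] at hs
  rw [Set.uIcc_of_le ht] at hprim
  have hgs : HasDerivAt h (g s) s := by
    refine ((hprim ⟨hs.1.le, hs.2⟩ t0 ⟨le_rfl, ht⟩).const_add (h t0)).congr_of_eventuallyEq ?_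
    filter_upwards [Ioi_mem_nhds hs.1] with y hy using hhg y hy.le
  rw [← hderiv hs.1.le, hgs.deriv]

lemma LocallyAbsolutelyContinuousFrom.hasDerivWithinAt_Ici_of_ae_deriv_eq
    (hh : LocallyAbsolutelyContinuousFrom t0 h) (hf : ContinuousOn f (Set.Ici t0))
    (hae : ∀ᵐ t, t0 ≤ t → deriv h t = f t) {t : ℝ} (ht : t0 ≤ t) :
    HasDerivWithinAt h (f t) (Set.Ici t) t := by
  have hint : IntervalIntegrable f volume t0 t :=
    (hf.mono (Set.uIcc_of_le ht ▸ Set.Icc_subset_Ici_self)).intervalIntegrable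
  have hsub : Set.Ioi t ⊆ Set.Ici t0 := fun y hy => ht.trans (le_of_lt hy)
  have hprim : HasDerivWithinAt (fun u => ∫ s in t0..u, f s) (f t) (Set.Ici t) t :=
    intervalIntegral.integral_hasDerivWithinAt_right hint (t := Set.Ioi t)
      ⟨Set.Ioi t, self_mem_nhdsWithin, (hf.mono hsub).aestronglyMeasurable measurableSet_Ioi⟩
      ((hf t ht).mono hsub)
  exact (hprim.const_add (h t0)).congr
    (fun y hy => hh.eq_add_integral_of_ae_deriv_eq hae (ht.trans hy))
    (hh.eq_add_integral_of_ae_deriv_eq hae ht)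

end LocallyAbsolutelyContinuous

section HalfLine

lemma continuousOn_Ici_of_differentiableAt {f : ℝ → ℝ} {t0 : ℝ}
    (hf : ∀ t, t0 ≤ t → DifferentiableAt ℝ f t) : ContinuousOn f (Set.Ici t0) :=
  fun t ht => (hf t ht).continuousAt.continuousWithinAt

lemma antitoneOn_Ici_of_hasDerivAt_nonpos {f f' : ℝ → ℝ} {t0 : ℝ}
    (hf : ∀ t, t0 ≤ t → HasDerivAt f (f' t) t) (hf' : ∀ t, t0 ≤ t → f' t ≤ 0) :
    AntitoneOn f (Set.Ici t0) := by
  refine antitoneOn_of_hasDerivWithinAt_nonpos (f' := f') (convex_Ici t0)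
    (continuousOn_Ici_of_differentiableAt fun t ht => (hf t ht).differentiableAt) ?_ ?_ <;>
  intro t ht <;> rw [interior_Ici] at ht
  exacts [(hf t ht.le).hasDerivWithinAt, hf' t ht.le]

lemma add_integral_le_of_hasDerivWithinAt_le_neg {E E' G : ℝ → ℝ} {t0 t : ℝ} (ht : t0 ≤ t)
    (hE : ContinuousOn E (Set.Ici t0)) (hG : ContinuousOn G (Set.Ici t0))
    (hE' : ∀ s, t0 ≤ s → HasDerivWithinAt E (E' s) (Set.Ici s) s)
    (hle : ∀ s, t0 ≤ s → E' s ≤ -G s) : E t + ∫ s in t0..t, G s ≤ E t0 := by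
  have hsub := intervalIntegral.sub_le_integral_of_hasDeriv_right_of_le ht
    (hE.mono Set.Icc_subset_Ici_self)
    (fun s hs => (hE' s hs.1.le).mono Set.Ioi_subset_Ici_self)
    ((hG.fun_neg.mono Set.Icc_subset_Ici_self).integrableOn_compact isCompact_Icc)
    (fun s hs => hle s hs.1.le)
  rw [intervalIntegral.integral_neg] at hsub
  linarith

lemma le_of_mul_deriv_add_mul_le {p p' β : ℝ → ℝ} {t0 t ε K B : ℝ} (ht : t0 ≤ t)
    (hp : ContinuousOn p (Set.Ici t0))
    (hp' : ∀ s, t0 ≤ s → HasDerivWithinAt p (p' s) (Set.Ici s) s)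
    (hβ : ∀ s, t0 ≤ s → 0 ≤ β s) (hle : ∀ s, t0 ≤ s → β s * p' s + ε * p s ≤ K)
    (h0 : p t0 ≤ B) (hB : K < ε * B) : p t ≤ B := by
  refine image_le_of_deriv_right_lt_deriv_boundary' (B := fun _ => B) (B' := fun _ => 0)
    (hp.mono Set.Icc_subset_Ici_self) (fun s hs => hp' s hs.1) h0 continuousOn_const
    (fun _ _ => hasDerivWithinAt_const _ _ _) (fun s hs hps => ?_) ⟨ht, le_rfl⟩
  have hs' : β s * p' s < 0 := by
    have := hle s hs.1
    rw [hps] at this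
    linarith
  exact neg_of_mul_neg_right hs' (hβ s hs.1)

lemma integrableOn_Ici_of_intervalIntegral_le {G : ℝ → ℝ} {t0 M : ℝ}
    (hG : ContinuousOn G (Set.Ici t0)) (hG0 : ∀ t, t0 ≤ t → 0 ≤ G t)
    (hM : ∀ t, t0 ≤ t → ∫ s in t0..t, G s ≤ M) : IntegrableOn G (Set.Ici t0) := by
  rw [integrableOn_Ici_iff_integrableOn_Ioi]
  refine integrableOn_Ioi_of_intervalIntegral_norm_bounded (l := atTop) M t0 (fun t => ?_)
    tendsto_id ?_
  · exact ((hG.mono Set.Icc_subset_Ici_self).integrableOn_compact isCompact_Icc).mono_set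
      Set.Ioc_subset_Icc_self
  · filter_upwards [eventually_ge_atTop t0] with t ht
    refine (intervalIntegral.integral_congr fun s hs => ?_).trans_le (hM t ht)
    rw [id, Set.uIcc_of_le ht] at hs
    exact Real.norm_of_nonneg (hG0 s hs.1)

lemma integrableOn_norm_sq_of_le_mul {F : Type*} [NormedAddCommGroup F] {f : ℝ → F} {G : ℝ → ℝ}
    {t0 k : ℝ} (hf : ContinuousOn f (Set.Ici t0)) (hG : IntegrableOn G (Set.Ici t0))
    (hle : ∀ t, t0 ≤ t → ‖f t‖ ^ 2 ≤ k * G t) :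
    IntegrableOn (fun t => ‖f t‖ ^ 2) (Set.Ici t0) := by
  refine (hG.const_mul k).mono' ((hf.norm.pow 2).aestronglyMeasurable measurableSet_Ici) ?_
  filter_upwards [ae_restrict_mem measurableSet_Ici] with t ht
  simpa using hle t ht

end HalfLine

/-- `f` is nonnegative, decreasing and convex on `[t0, ∞)`, with derivative `f'`. The derivative is
a separate argument because `deriv f` may be discontinuous at `t0` when `f` is only controlled to
the right of `t0`. -/
structure IsDecreasingConvexFrom (t0 : ℝ) (f f' : ℝ → ℝ) : Prop where
  nonneg : ∀ t, t0 ≤ t → 0 ≤ f t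
  hasDerivAt : ∀ t, t0 ≤ t → HasDerivAt f (f' t) t
  deriv_nonpos : ∀ t, t0 ≤ t → f' t ≤ 0
  differentiableAt_deriv : ∀ t, t0 ≤ t → DifferentiableAt ℝ f' t
  deriv_deriv_nonneg : ∀ t, t0 ≤ t → 0 ≤ deriv f' t

namespace IsDecreasingConvexFrom

variable {t0 : ℝ} {f f' g g' : ℝ → ℝ}

lemma antitoneOn (hf : IsDecreasingConvexFrom t0 f f') : AntitoneOn f (Set.Ici t0) :=
  antitoneOn_Ici_of_hasDerivAt_nonpos hf.hasDerivAt hf.deriv_nonpos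

lemma le_initial (hf : IsDecreasingConvexFrom t0 f f') {t : ℝ} (ht : t0 ≤ t) : f t ≤ f t0 :=
  hf.antitoneOn Set.self_mem_Ici ht ht

lemma continuousOn (hf : IsDecreasingConvexFrom t0 f f') : ContinuousOn f (Set.Ici t0) :=
  continuousOn_Ici_of_differentiableAt fun t ht => (hf.hasDerivAt t ht).differentiableAt

lemma continuousOn_deriv (hf : IsDecreasingConvexFrom t0 f f') : ContinuousOn f' (Set.Ici t0) :=
  continuousOn_Ici_of_differentiableAt hf.differentiableAt_deriv

lemma mul (hf : IsDecreasingConvexFrom t0 f f') (hg : IsDecreasingConvexFrom t0 g g') :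
    IsDecreasingConvexFrom t0 (fun t => f t * g t) (fun t => f' t * g t + f t * g' t) := by
  have hf'' t ht := (hf.differentiableAt_deriv t ht).hasDerivAt
  have hg'' t ht := (hg.differentiableAt_deriv t ht).hasDerivAt
  have hderiv t (ht : t0 ≤ t) := ((hf'' t ht).fun_mul (hg.hasDerivAt t ht)).fun_add
    ((hf.hasDerivAt t ht).fun_mul (hg'' t ht))
  refine ⟨fun t ht => mul_nonneg (hf.nonneg t ht) (hg.nonneg t ht),
    fun t ht => (hf.hasDerivAt t ht).fun_mul (hg.hasDerivAt t ht), fun t ht => ?_,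
    fun t ht => (hderiv t ht).differentiableAt, fun t ht => ?_⟩
  · exact add_nonpos
      (mul_nonpos_of_nonpos_of_nonneg (hf.deriv_nonpos t ht) (hg.nonneg t ht))
      (mul_nonpos_of_nonneg_of_nonpos (hf.nonneg t ht) (hg.deriv_nonpos t ht))
  · have hcross := mul_nonneg_of_nonpos_of_nonpos (hf.deriv_nonpos t ht) (hg.deriv_nonpos t ht)
    rw [(hderiv t ht).deriv]
    exact add_nonneg
      (add_nonneg (mul_nonneg (hf.deriv_deriv_nonneg t ht) (hg.nonneg t ht)) hcross)
      (add_nonneg hcross (mul_nonneg (hf.nonneg t ht) (hg.deriv_deriv_nonneg t ht)))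

lemma const_sub {k : ℝ} (hle : ∀ t, t0 ≤ t → g t ≤ k)
    (hg : ∀ t, t0 ≤ t → HasDerivAt g (g' t) t) (hg' : ∀ t, t0 ≤ t → 0 ≤ g' t)
    (hdiff : ∀ t, t0 ≤ t → DifferentiableAt ℝ g' t) (hg'' : ∀ t, t0 ≤ t → deriv g' t ≤ 0) :
    IsDecreasingConvexFrom t0 (fun t => k - g t) (fun t => -g' t) where
  nonneg t ht := sub_nonneg.2 (hle t ht)
  hasDerivAt t ht := (hg t ht).const_sub k
  deriv_nonpos t ht := neg_nonpos.2 (hg' t ht)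
  differentiableAt_deriv t ht := (hdiff t ht).fun_neg
  deriv_deriv_nonneg t ht := by simpa only [deriv.fun_neg, neg_nonneg] using hg'' t ht

lemma inv (hpos : ∀ t, t0 ≤ t → 0 < g t)
    (hg : ∀ t, t0 ≤ t → HasDerivAt g (g' t) t) (hg' : ∀ t, t0 ≤ t → 0 ≤ g' t)
    (hdiff : ∀ t, t0 ≤ t → DifferentiableAt ℝ g' t) (hg'' : ∀ t, t0 ≤ t → deriv g' t ≤ 0) :
    IsDecreasingConvexFrom t0 (fun t => (g t)⁻¹) (fun t => -g' t / g t ^ 2) := by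
  have hderiv t (ht : t0 ≤ t) := (hdiff t ht).hasDerivAt.fun_neg.fun_div ((hg t ht).fun_pow 2)
    (pow_ne_zero 2 (hpos t ht).ne')
  refine ⟨fun t ht => (inv_pos.2 (hpos t ht)).le, fun t ht => (hg t ht).fun_inv (hpos t ht).ne',
    fun t ht => ?_, fun t ht => (hderiv t ht).differentiableAt, fun t ht => ?_⟩
  · exact div_nonpos_of_nonpos_of_nonneg (neg_nonpos.2 (hg' t ht)) (sq_nonneg _)
  · have hg0 := (hpos t ht).le
    have hsecond : 0 ≤ -deriv g' t * g t ^ 2 :=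
      mul_nonneg (neg_nonneg.2 (hg'' t ht)) (sq_nonneg _)
    have hfirst : 0 ≤ 2 * g t * g' t ^ 2 := by positivity
    rw [(hderiv t ht).deriv]
    refine div_nonneg ?_ (by positivity)
    push_cast
    linarith

end IsDecreasingConvexFrom

section Hilbert

variable {H : Type*} [NormedAddCommGroup H] [InnerProductSpace ℝ H]

lemma abs_two_mul_inner_le_mul_add_inv_mul {r : ℝ} (hr : 0 < r) (x y : H) :
    |2 * ⟪x, y⟫_ℝ| ≤ r * ‖x‖ ^ 2 + r⁻¹ * ‖y‖ ^ 2 :=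
  calc |2 * ⟪x, y⟫_ℝ| = 2 * |⟪x, y⟫_ℝ| := by rw [abs_mul, abs_two]
    _ ≤ 2 * (‖x‖ * ‖y‖) := by gcongr; exact abs_real_inner_le_norm x y
    _ = 2 * ‖x‖ * ‖y‖ := by ring
    _ ≤ r * ‖x‖ ^ 2 + r⁻¹ * ‖y‖ ^ 2 := two_mul_le_add_mul_sq hr

lemma norm_sq_le_of_quasiCocoercive {ω β D : ℝ} {X u v : H} (hβ : 0 ≤ β) (hD : 0 < D)
    (hu : ω * ‖u‖ ^ 2 ≤ ⟪u, X + v⟫_ℝ) :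
    β * (2 * ω - D) * ‖u‖ ^ 2 ≤ 2 * ⟪X, β • u⟫_ℝ + β / D * ‖v‖ ^ 2 := by
  have hyoung := (abs_le.1 (abs_two_mul_inner_le_mul_add_inv_mul hD u v)).2
  rw [inner_add_right] at hu
  have hscaled : β * ((2 * ω - D) * ‖u‖ ^ 2) ≤ β * (2 * ⟪u, X⟫_ℝ + D⁻¹ * ‖v‖ ^ 2) :=
    mul_le_mul_of_nonneg_left (by linarith) hβ
  rw [real_inner_smul_right, real_inner_comm u X, div_eq_mul_inv]
  linarith

lemma exists_pos_mul_norm_sq_le {c d e m : ℝ} (hc : 0 < c) (hd : 0 < d)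
    (hgap : 1 / c < e - m ^ 2 / d) :
    ∃ ε > 0, ∀ (X a b : H) (A : ℝ), |A| ≤ m →
      ε * (‖X‖ ^ 2 + ‖a‖ ^ 2 + ‖b‖ ^ 2) ≤
        c * ‖X‖ ^ 2 + 2 * ⟪X, b⟫_ℝ + d * ‖a‖ ^ 2 + 2 * A * ⟪a, b⟫_ℝ + e * ‖b‖ ^ 2 := by
  -- The strict gap survives lowering each of `c`, `d`, `e` by a small `ε`.
  have hcont : ContinuousAt (fun ε : ℝ => e - ε - (c - ε)⁻¹ - m ^ 2 * (d - ε)⁻¹) 0 := by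
    have hc' : c - 0 ≠ 0 := by linarith
    have hd' : d - 0 ≠ 0 := by linarith
    fun_prop (disch := assumption)
  have hgap0 : 0 < e - 0 - (c - 0)⁻¹ - m ^ 2 * (d - 0)⁻¹ := by
    rw [one_div, div_eq_mul_inv] at hgap
    simp only [sub_zero]
    linarith
  have hsmall : ∀ᶠ ε in 𝓝 (0 : ℝ),
      0 < e - ε - (c - ε)⁻¹ - m ^ 2 * (d - ε)⁻¹ ∧ ε < c ∧ ε < d :=
    (hcont.eventually (lt_mem_nhds hgap0)).and ((gt_mem_nhds hc).and (gt_mem_nhds hd))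
  obtain ⟨ε, ⟨hε, hεc, hεd⟩, hεpos⟩ :=
    ((hsmall.filter_mono nhdsWithin_le_nhds).and (self_mem_nhdsWithin (s := Set.Ioi 0))).exists
  refine ⟨ε, hεpos, fun X a b A hA => ?_⟩
  have hXb := (abs_le.1 (abs_two_mul_inner_le_mul_add_inv_mul (sub_pos.2 hεc) X b)).1
  have hab := (abs_le.1 (abs_two_mul_inner_le_mul_add_inv_mul (sub_pos.2 hεd) a (A • b))).1
  rw [real_inner_smul_right, norm_smul, mul_pow, Real.norm_eq_abs] at hab
  have hAb : (d - ε)⁻¹ * (|A| ^ 2 * ‖b‖ ^ 2) ≤ (d - ε)⁻¹ * (m ^ 2 * ‖b‖ ^ 2) := by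
    have := sub_pos.2 hεd
    gcongr
  have hb := mul_nonneg hε.le (sq_nonneg ‖b‖)
  linarith

lemma exists_forall_mul_add_le_of_inner_add_le {X a : ℝ → H} {β q I : ℝ → ℝ} {t0 ε b K : ℝ}
    (hX : ContinuousOn X (Set.Ici t0))
    (hX' : ∀ t, t0 ≤ t → HasDerivWithinAt X (a t) (Set.Ici t) t) (hε : 0 < ε)
    (hβ : ∀ t, t0 ≤ t → 0 ≤ β t) (hβb : ∀ t, t0 ≤ t → β t ≤ b)
    (hq : ∀ t, t0 ≤ t → ‖X t‖ ^ 2 + ‖a t‖ ^ 2 ≤ q t) (hI : ∀ t, t0 ≤ t → 0 ≤ I t)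
    (hle : ∀ t, t0 ≤ t → 2 * β t * ⟪X t, a t⟫_ℝ + ε * q t + I t ≤ K) :
    ∃ M, ∀ t, t0 ≤ t → ε / 2 * q t + I t ≤ M := by
  obtain ⟨B, hB0, hBK⟩ : ∃ B, ‖X t0‖ ^ 2 ≤ B ∧ K < ε * B :=
    ⟨max (‖X t0‖ ^ 2) (K / ε + 1), le_max_left _ _,
      (div_lt_iff₀' hε).1 ((lt_add_one _).trans_le (le_max_right _ _))⟩
  have hXB : ∀ t, t0 ≤ t → ‖X t‖ ^ 2 ≤ B := fun t ht =>
    le_of_mul_deriv_add_mul_le (p := fun s => ‖X s‖ ^ 2) ht (hX.norm.pow 2)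
      (fun s hs => (hX' s hs).norm_sq) hβ
      (fun s hs => by
        have hqs : ε * ‖X s‖ ^ 2 ≤ ε * q s :=
          mul_le_mul_of_nonneg_left (by linarith [hq s hs, sq_nonneg ‖a s‖]) hε.le
        linarith [hle s hs, hI s hs]) hB0 hBK
  refine ⟨K + (ε / 2)⁻¹ * (b ^ 2 * B), fun t ht => ?_⟩
  have hyoung := (abs_le.1
    (abs_two_mul_inner_le_mul_add_inv_mul (half_pos hε) (a t) (β t • X t))).1
  rw [real_inner_smul_right, real_inner_comm, norm_smul, mul_pow, Real.norm_eq_abs, sq_abs]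
    at hyoung
  have hβX : (ε / 2)⁻¹ * (β t ^ 2 * ‖X t‖ ^ 2) ≤ (ε / 2)⁻¹ * (b ^ 2 * B) := by
    have := hβ t ht
    gcongr
    exacts [hβb t ht, hXB t ht]
  have hqa : ε / 2 * ‖a t‖ ^ 2 ≤ ε / 2 * q t :=
    mul_le_mul_of_nonneg_left (by linarith [hq t ht, sq_nonneg ‖X t‖]) (half_pos hε).le
  linarith [hle t ht]

end Hilbert

section Normed

variable {F : Type*} [NormedAddCommGroup F] [NormedSpace ℝ F]

lemma norm_smul_add_smul_le {p q P : ℝ} (hp : |p| ≤ P) (hq : |q| ≤ P) (a b : F) :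
    ‖p • a + q • b‖ ≤ P * (‖a‖ + ‖b‖) :=
  calc ‖p • a + q • b‖ ≤ |p| * ‖a‖ + |q| * ‖b‖ := by
        simpa only [norm_smul, Real.norm_eq_abs] using norm_add_le (p • a) (q • b)
    _ ≤ P * ‖a‖ + P * ‖b‖ := by gcongr
    _ = P * (‖a‖ + ‖b‖) := (mul_add _ _ _).symm

lemma norm_le_of_add_smul_eq_zero {p0 p1 p2 μ P : ℝ} (hμ : 0 < μ) (hp0 : μ ≤ p0) (hp1 : |p1| ≤ P)
    (hp2 : |p2| ≤ P) {a b c u : F} (heq : c + p2 • b + p1 • a + p0 • u = 0) :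
    ‖u‖ ≤ (1 + P) / μ * (‖a‖ + ‖b‖ + ‖c‖) := by
  rw [div_mul_eq_mul_div, le_div_iff₀' hμ]
  have hP : 0 ≤ P := (abs_nonneg p1).trans hp1
  calc μ * ‖u‖ ≤ p0 * ‖u‖ := by gcongr
    _ = ‖c + (p1 • a + p2 • b)‖ := by
      rw [← abs_of_pos (hμ.trans_le hp0), ← Real.norm_eq_abs, ← norm_smul, ← norm_neg,
        ← eq_neg_of_add_eq_zero_left heq, add_assoc, add_comm (p1 • a)]
    _ ≤ ‖c‖ + P * (‖a‖ + ‖b‖) := by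
      grw [norm_add_le, norm_smul_add_smul_le hp1 hp2]
    _ ≤ (1 + P) * (‖a‖ + ‖b‖ + ‖c‖) := by
      nlinarith [norm_nonneg a, norm_nonneg b, norm_nonneg c]

end Normed

/-- The coefficients of the system
`x''' + β2 x'' + β1 x' + β0 U(x + lam1 x' + lam2 x'') = 0` on `[t0, ∞)`, together with the modulus
`ω` of quasi-cocoercivity of `U` and the auxiliary function `D` with which the perturbation
`lam1 x' + lam2 x''` is absorbed. -/
structure ThirdOrderCoefficients where
  (ω t0 : ℝ)
  (β0 β1 β2 lam1 lam2 D : ℝ → ℝ)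

namespace ThirdOrderCoefficients

/-- The dissipation coefficient of `‖x'''‖²`. -/
noncomputable def C0 (S : ThirdOrderCoefficients) (t : ℝ) : ℝ :=
  (2 * S.ω - S.D t) / S.β0 t

/-- The coefficient of `(‖x'‖²)'` in the Lyapunov function. -/
noncomputable def A2 (S : ThirdOrderCoefficients) (t : ℝ) : ℝ :=
  (2 * S.ω - S.D t) * S.β1 t / S.β0 t

/-- The coefficient of `‖x''‖²` in the Lyapunov function. -/
noncomputable def B1 (S : ThirdOrderCoefficients) (t : ℝ) : ℝ :=
  (2 * S.ω - S.D t) * S.β2 t / S.β0 t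

/-- The coefficient of `‖x'‖²` in the Lyapunov function. -/
noncomputable def A1 (S : ThirdOrderCoefficients) (t : ℝ) : ℝ :=
  (2 * S.ω - S.D t) * S.β1 t * S.β2 t / S.β0 t
    - S.β0 t / S.D t * (S.lam1 t * S.lam2 t) - 3

/-- The dissipation coefficient of `‖x'‖²`. -/
noncomputable def A0 (S : ThirdOrderCoefficients) (t : ℝ) : ℝ :=
  (2 * S.ω - S.D t) * S.β1 t ^ 2 / S.β0 t - S.β0 t / S.D t * S.lam1 t ^ 2 - 2 * S.β2 t

/-- The dissipation coefficient of `‖x''‖²`. -/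
noncomputable def B0 (S : ThirdOrderCoefficients) (t : ℝ) : ℝ :=
  (2 * S.ω - S.D t) / S.β0 t * (S.β2 t ^ 2 - 2 * S.β1 t) - S.β0 t / S.D t * S.lam2 t ^ 2

/-- The derivative of `C0` on `[t0, ∞)`, as given by the product rule for `(2 * ω - D) * β0⁻¹`. -/
noncomputable def C0Deriv (S : ThirdOrderCoefficients) (t : ℝ) : ℝ :=
  -deriv S.D t * (S.β0 t)⁻¹ + (2 * S.ω - S.D t) * (-deriv S.β0 t / S.β0 t ^ 2)

/-- The derivative of `A2` on `[t0, ∞)`, as given by the product rule for `C0 * β1`. -/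
noncomputable def A2Deriv (S : ThirdOrderCoefficients) (t : ℝ) : ℝ :=
  S.C0Deriv t * S.β1 t + S.C0 t * deriv S.β1 t

/-- The sign, regularity and monotonicity conditions on the coefficients. -/
structure IsAdmissible (S : ThirdOrderCoefficients) : Prop where
  β0_pos : ∀ t, S.t0 ≤ t → 0 < S.β0 t
  β1_pos : ∀ t, S.t0 ≤ t → 0 < S.β1 t
  β2_pos : ∀ t, S.t0 ≤ t → 0 < S.β2 t
  β0_diff : ∀ t, S.t0 ≤ t → DifferentiableAt ℝ S.β0 t ∧ DifferentiableAt ℝ (deriv S.β0) t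
  β1_diff : ∀ t, S.t0 ≤ t → DifferentiableAt ℝ S.β1 t ∧ DifferentiableAt ℝ (deriv S.β1) t
  β2_diff : ∀ t, S.t0 ≤ t → DifferentiableAt ℝ S.β2 t ∧ DifferentiableAt ℝ (deriv S.β2) t
  β2_sign : ∀ t, S.t0 ≤ t → deriv S.β2 t ≤ 0 ∧ 0 ≤ deriv (deriv S.β2) t
  β1_sign : ∀ t, S.t0 ≤ t → deriv S.β1 t ≤ 0 ∧ 0 ≤ deriv (deriv S.β1) t
  β0_sign : ∀ t, S.t0 ≤ t → 0 ≤ deriv S.β0 t ∧ deriv (deriv S.β0) t ≤ 0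
  lam1_nonneg : ∀ t, S.t0 ≤ t → 0 ≤ S.lam1 t
  lam2_nonneg : ∀ t, S.t0 ≤ t → 0 ≤ S.lam2 t
  lam1_mono : ∀ t, S.t0 ≤ t → DifferentiableAt ℝ S.lam1 t ∧ 0 ≤ deriv S.lam1 t
  lam2_mono : ∀ t, S.t0 ≤ t → DifferentiableAt ℝ S.lam2 t ∧ 0 ≤ deriv S.lam2 t
  D_pos : ∀ t, S.t0 ≤ t → 0 < S.D t
  D_lt : ∀ t, S.t0 ≤ t → S.D t < 2 * S.ω
  D_diff : ∀ t, S.t0 ≤ t → DifferentiableAt ℝ S.D t ∧ DifferentiableAt ℝ (deriv S.D) t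
  D_sq_ge : ∀ t, S.t0 ≤ t →
    S.β0 t ^ 2 * S.lam1 t * S.lam2 t / (S.β1 t * S.β2 t) ≤ S.D t ^ 2
  D_sign : ∀ t, S.t0 ≤ t → 0 ≤ deriv S.D t ∧ deriv (deriv S.D) t ≤ 0

/-- The uniform bounds with constants `δ1, …, δ6` and `c1 = inf β1` under which the Lyapunov
function is coercive and strictly dissipated. -/
structure IsCoercive (S : ThirdOrderCoefficients) (δ1 δ2 δ3 δ4 δ5 δ6 c1 : ℝ) : Prop where
  δ1_pos : 0 < δ1
  δ2_pos : 0 < δ2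
  δ3_pos : 0 < δ3
  δ6_pos : 0 < δ6
  isGLB_β1 : IsGLB (S.β1 '' Set.Ici S.t0) c1
  A0_ge : ∀ t, S.t0 ≤ t → δ1 ≤ S.A0 t
  B0_ge : ∀ t, S.t0 ≤ t → δ2 ≤ S.B0 t
  A1_ge : ∀ t, S.t0 ≤ t → δ3 ≤ S.A1 t + 2
  A2_le : ∀ t, S.t0 ≤ t → S.A2 t ≤ δ4
  B1_ge : ∀ t, S.t0 ≤ t → δ5 ≤ S.B1 t
  C0_ge : ∀ t, S.t0 ≤ t → δ6 ≤ S.C0 t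
  gap : 1 / c1 < δ5 - δ4 ^ 2 / δ3

variable {S : ThirdOrderCoefficients} {t : ℝ} {δ1 δ2 δ3 δ4 δ5 δ6 c1 : ℝ}

section Coefficients

lemma A2_eq_mul (S : ThirdOrderCoefficients) : S.A2 = fun t => S.C0 t * S.β1 t :=
  funext fun _ => mul_div_right_comm _ _ _

lemma B1_eq_mul (S : ThirdOrderCoefficients) : S.B1 = fun t => S.C0 t * S.β2 t :=
  funext fun _ => mul_div_right_comm _ _ _

lemma A1_eq (S : ThirdOrderCoefficients) :
    S.A1 = fun t => S.A2 t * S.β2 t - S.β0 t / S.D t * (S.lam1 t * S.lam2 t) - 3 :=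
  funext fun t => by simp only [A1, A2]; ring

namespace IsAdmissible

lemma β1_decreasingConvex (hS : S.IsAdmissible) :
    IsDecreasingConvexFrom S.t0 S.β1 (deriv S.β1) where
  nonneg t ht := (hS.β1_pos t ht).le
  hasDerivAt t ht := (hS.β1_diff t ht).1.hasDerivAt
  deriv_nonpos t ht := (hS.β1_sign t ht).1
  differentiableAt_deriv t ht := (hS.β1_diff t ht).2
  deriv_deriv_nonneg t ht := (hS.β1_sign t ht).2

lemma β2_decreasingConvex (hS : S.IsAdmissible) :
    IsDecreasingConvexFrom S.t0 S.β2 (deriv S.β2) where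
  nonneg t ht := (hS.β2_pos t ht).le
  hasDerivAt t ht := (hS.β2_diff t ht).1.hasDerivAt
  deriv_nonpos t ht := (hS.β2_sign t ht).1
  differentiableAt_deriv t ht := (hS.β2_diff t ht).2
  deriv_deriv_nonneg t ht := (hS.β2_sign t ht).2

lemma inv_β0_decreasingConvex (hS : S.IsAdmissible) :
    IsDecreasingConvexFrom S.t0 (fun t => (S.β0 t)⁻¹) (fun t => -deriv S.β0 t / S.β0 t ^ 2) :=
  .inv hS.β0_pos (fun t ht => (hS.β0_diff t ht).1.hasDerivAt) (fun t ht => (hS.β0_sign t ht).1)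
    (fun t ht => (hS.β0_diff t ht).2) (fun t ht => (hS.β0_sign t ht).2)

lemma C0_decreasingConvex (hS : S.IsAdmissible) :
    IsDecreasingConvexFrom S.t0 S.C0 S.C0Deriv := by
  have hsub : IsDecreasingConvexFrom S.t0 (fun t => 2 * S.ω - S.D t) (fun t => -deriv S.D t) :=
    .const_sub (fun t ht => (hS.D_lt t ht).le) (fun t ht => (hS.D_diff t ht).1.hasDerivAt)
      (fun t ht => (hS.D_sign t ht).1) (fun t ht => (hS.D_diff t ht).2)
      (fun t ht => (hS.D_sign t ht).2)
  exact hsub.mul hS.inv_β0_decreasingConvex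

lemma A2_decreasingConvex (hS : S.IsAdmissible) :
    IsDecreasingConvexFrom S.t0 S.A2 S.A2Deriv :=
  S.A2_eq_mul ▸ hS.C0_decreasingConvex.mul hS.β1_decreasingConvex

lemma B1_decreasingConvex (hS : S.IsAdmissible) :
    IsDecreasingConvexFrom S.t0 S.B1 (fun t => S.C0Deriv t * S.β2 t + S.C0 t * deriv S.β2 t) :=
  S.B1_eq_mul ▸ hS.C0_decreasingConvex.mul hS.β2_decreasingConvex

lemma hasDerivAt_B1 (hS : S.IsAdmissible) (ht : S.t0 ≤ t) : HasDerivAt S.B1 (deriv S.B1 t) t :=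
  (hS.B1_decreasingConvex.hasDerivAt t ht).differentiableAt.hasDerivAt

lemma deriv_B1_nonpos (hS : S.IsAdmissible) (ht : S.t0 ≤ t) : deriv S.B1 t ≤ 0 :=
  (hS.B1_decreasingConvex.hasDerivAt t ht).deriv ▸ hS.B1_decreasingConvex.deriv_nonpos t ht

lemma deriv_A2_mul_β2_le (hS : S.IsAdmissible) (ht : S.t0 ≤ t) :
    S.A2Deriv t * S.β2 t + S.A2 t * deriv S.β2 t ≤
      -(deriv S.D t / S.β0 t * (S.β1 t * S.β2 t)) := by
  have hβ1 := hS.β1_pos t ht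
  have hβ2 := hS.β2_pos t ht
  have hC0 : S.C0Deriv t ≤ -(deriv S.D t / S.β0 t) := by
    have := mul_nonpos_of_nonneg_of_nonpos (sub_nonneg.2 (hS.D_lt t ht).le)
      (hS.inv_β0_decreasingConvex.deriv_nonpos t ht)
    rw [C0Deriv, div_eq_mul_inv (deriv S.D t)]
    linarith
  have hC0' := mul_le_mul_of_nonneg_right hC0 (mul_pos hβ1 hβ2).le
  have hβ1' := mul_nonpos_of_nonpos_of_nonneg (mul_nonpos_of_nonneg_of_nonpos
    (hS.C0_decreasingConvex.nonneg t ht) (hS.β1_sign t ht).1) hβ2.le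
  have hβ2' := mul_nonpos_of_nonneg_of_nonpos (hS.A2_decreasingConvex.nonneg t ht)
    (hS.β2_sign t ht).1
  rw [A2Deriv]
  linarith

lemma le_deriv_β0_div_D_mul (hS : S.IsAdmissible) (ht : S.t0 ≤ t) :
    -(deriv S.D t / S.β0 t * (S.β1 t * S.β2 t)) ≤
      (deriv S.β0 t * S.D t - S.β0 t * deriv S.D t) / S.D t ^ 2 * (S.lam1 t * S.lam2 t)
        + S.β0 t / S.D t * (deriv S.lam1 t * S.lam2 t + S.lam1 t * deriv S.lam2 t) := by
  have hβ0 := hS.β0_pos t ht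
  have hβ12 := mul_pos (hS.β1_pos t ht) (hS.β2_pos t ht)
  have hD := hS.D_pos t ht
  have hl1 := hS.lam1_nonneg t ht
  have hl2 := hS.lam2_nonneg t ht
  have hβ0' := (hS.β0_sign t ht).1
  have hD' := (hS.D_sign t ht).1
  have hl1' := (hS.lam1_mono t ht).2
  have hl2' := (hS.lam2_mono t ht).2
  have hβ0term : 0 ≤ deriv S.β0 t / S.D t * (S.lam1 t * S.lam2 t) := by positivity
  have hlamterm :
      0 ≤ S.β0 t / S.D t * (deriv S.lam1 t * S.lam2 t + S.lam1 t * deriv S.lam2 t) := by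
    positivity
  have hDterm : S.β0 t * deriv S.D t / S.D t ^ 2 * (S.lam1 t * S.lam2 t) ≤
      deriv S.D t / S.β0 t * (S.β1 t * S.β2 t) :=
    calc S.β0 t * deriv S.D t / S.D t ^ 2 * (S.lam1 t * S.lam2 t)
        = deriv S.D t / S.β0 t * (S.β0 t ^ 2 * S.lam1 t * S.lam2 t / S.D t ^ 2) := by
          field_simp
      _ ≤ deriv S.D t / S.β0 t * (S.β1 t * S.β2 t) := by
          gcongr
          rw [div_le_comm₀ (by positivity) hβ12]
          exact hS.D_sq_ge t ht
  have hsplit : (deriv S.β0 t * S.D t - S.β0 t * deriv S.D t) / S.D t ^ 2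
        * (S.lam1 t * S.lam2 t)
      = deriv S.β0 t / S.D t * (S.lam1 t * S.lam2 t)
        - S.β0 t * deriv S.D t / S.D t ^ 2 * (S.lam1 t * S.lam2 t) := by
    field_simp
  linarith

lemma exists_hasDerivAt_A1_nonpos (hS : S.IsAdmissible) (ht : S.t0 ≤ t) :
    ∃ A1' ≤ 0, HasDerivAt S.A1 A1' t := by
  have hA2β2 := (hS.A2_decreasingConvex.hasDerivAt t ht).fun_mul (hS.β2_diff t ht).1.hasDerivAt
  have hratio := ((hS.β0_diff t ht).1.hasDerivAt.fun_div (hS.D_diff t ht).1.hasDerivAt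
    (hS.D_pos t ht).ne').fun_mul
    ((hS.lam1_mono t ht).1.hasDerivAt.fun_mul (hS.lam2_mono t ht).1.hasDerivAt)
  refine ⟨_, ?_, S.A1_eq ▸ (hA2β2.fun_sub hratio).sub_const 3⟩
  exact sub_nonpos.2 ((hS.deriv_A2_mul_β2_le ht).trans (hS.le_deriv_β0_div_D_mul ht))

lemma hasDerivAt_A1 (hS : S.IsAdmissible) (ht : S.t0 ≤ t) :
    HasDerivAt S.A1 (deriv S.A1 t) t :=
  let ⟨_, _, hA1⟩ := hS.exists_hasDerivAt_A1_nonpos ht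
  hA1.differentiableAt.hasDerivAt

lemma deriv_A1_nonpos (hS : S.IsAdmissible) (ht : S.t0 ≤ t) : deriv S.A1 t ≤ 0 :=
  let ⟨_, hnonpos, hA1⟩ := hS.exists_hasDerivAt_A1_nonpos ht
  hA1.deriv ▸ hnonpos

lemma β0_initial_le (hS : S.IsAdmissible) (ht : S.t0 ≤ t) : S.β0 S.t0 ≤ S.β0 t :=
  inv_le_inv₀ (hS.β0_pos t ht) (hS.β0_pos S.t0 le_rfl) |>.1
    (hS.inv_β0_decreasingConvex.le_initial ht)

lemma le_sqrt_of_β0_div_D_mul_sq_le (hS : S.IsAdmissible) (ht : S.t0 ≤ t) {l P : ℝ}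
    (hl : S.β0 t / S.D t * l ^ 2 ≤ P) : l ≤ √(2 * S.ω / S.β0 S.t0 * P) := by
  have hβ0 := hS.β0_pos S.t0 le_rfl
  have hD := hS.D_pos t ht
  have hω : 0 < 2 * S.ω := hD.trans (hS.D_lt t ht)
  have hratio : S.β0 S.t0 / (2 * S.ω) ≤ S.β0 t / S.D t :=
    div_le_div₀ (hβ0.le.trans (hS.β0_initial_le ht)) (hS.β0_initial_le ht) hD (hS.D_lt t ht).le
  refine Real.le_sqrt_of_sq_le ?_
  rw [← inv_div, ← div_eq_inv_mul, le_div_iff₀' (by positivity)]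
  exact (mul_le_mul_of_nonneg_right hratio (sq_nonneg l)).trans hl

end IsAdmissible

lemma IsCoercive.exists_lam_le (hδ : S.IsCoercive δ1 δ2 δ3 δ4 δ5 δ6 c1) (hS : S.IsAdmissible) :
    ∃ Λ, ∀ t, S.t0 ≤ t → S.lam1 t ≤ Λ ∧ S.lam2 t ≤ Λ := by
  refine ⟨max √(2 * S.ω / S.β0 S.t0 * (S.A2 S.t0 * S.β1 S.t0))
    √(2 * S.ω / S.β0 S.t0 * (S.B1 S.t0 * S.β2 S.t0)), fun t ht => ⟨le_max_of_le_left ?_,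
    le_max_of_le_right ?_⟩⟩ <;> refine hS.le_sqrt_of_β0_div_D_mul_sq_le ht ?_
  · refine le_trans ?_ ((hS.A2_decreasingConvex.mul hS.β1_decreasingConvex).le_initial ht)
    have hA0 : δ1 ≤ S.A2 t * S.β1 t - S.β0 t / S.D t * S.lam1 t ^ 2 - 2 * S.β2 t :=
      (hδ.A0_ge t ht).trans_eq (by rw [A0, A2]; ring)
    linarith [hδ.δ1_pos, hS.β2_pos t ht]
  · refine le_trans ?_ ((hS.B1_decreasingConvex.mul hS.β2_decreasingConvex).le_initial ht)
    have hB0 : δ2 ≤ S.B1 t * S.β2 t - 2 * S.A2 t - S.β0 t / S.D t * S.lam2 t ^ 2 :=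
      (hδ.B0_ge t ht).trans_eq (by rw [B0, B1, A2]; ring)
    linarith [hδ.δ2_pos, hS.A2_decreasingConvex.nonneg t ht]

lemma IsCoercive.c1_pos (hδ : S.IsCoercive δ1 δ2 δ3 δ4 δ5 δ6 c1) (hS : S.IsAdmissible) :
    0 < c1 := by
  have hB1 : 0 < S.B1 S.t0 := by
    rw [B1_eq_mul]
    exact mul_pos (hδ.δ6_pos.trans_le (hδ.C0_ge _ le_rfl)) (hS.β2_pos _ le_rfl)
  refine (inv_pos.2 hB1).trans_le (hδ.isGLB_β1.2 ?_)
  rintro _ ⟨t, ht, rfl⟩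
  have hratio : 0 ≤ S.β0 t / S.D t * (S.lam1 t * S.lam2 t) :=
    mul_nonneg (div_pos (hS.β0_pos t ht) (hS.D_pos t ht)).le
      (mul_nonneg (hS.lam1_nonneg t ht) (hS.lam2_nonneg t ht))
  have hA1 : S.A1 t = S.B1 t * S.β1 t - S.β0 t / S.D t * (S.lam1 t * S.lam2 t) - 3 := by
    rw [A1, B1]; ring
  rw [inv_le_iff_one_le_mul₀' hB1]
  calc 1 ≤ S.B1 t * S.β1 t := by linarith [hδ.A1_ge t ht, hδ.δ3_pos]
    _ ≤ S.B1 S.t0 * S.β1 t :=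
      mul_le_mul_of_nonneg_right (hS.B1_decreasingConvex.le_initial ht) (hS.β1_pos t ht).le

end Coefficients

/-- The Lyapunov function at time `t`, as a function of `X = x - z`, `a = x'` and `b = x''`. Its
first three terms are `p'' + β2 p' + (β1 - β2') p` with `p = ‖X‖²`. -/
noncomputable def lyapunov {H : Type*} [NormedAddCommGroup H] [InnerProductSpace ℝ H]
    (S : ThirdOrderCoefficients) (t : ℝ) (X a b : H) : ℝ :=
  2 * (‖a‖ ^ 2 + ⟪X, b⟫_ℝ) + 2 * S.β2 t * ⟪X, a⟫_ℝ + (S.β1 t - deriv S.β2 t) * ‖X‖ ^ 2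
    + (S.A1 t - S.A2Deriv t) * ‖a‖ ^ 2 + 2 * S.A2 t * ⟪a, b⟫_ℝ + S.B1 t * ‖b‖ ^ 2

/-- The derivative of `lyapunov` along a curve with position `X`, velocity `a`, acceleration `b` and
jerk `c` at time `t`. -/
noncomputable def lyapunovRate {H : Type*} [NormedAddCommGroup H] [InnerProductSpace ℝ H]
    (S : ThirdOrderCoefficients) (t : ℝ) (X a b c : H) : ℝ :=
  2 * (3 * ⟪a, b⟫_ℝ + ⟪X, c⟫_ℝ) + 2 * S.β2 t * (‖a‖ ^ 2 + ⟪X, b⟫_ℝ) + 2 * S.β1 t * ⟪X, a⟫_ℝ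
    + (deriv S.β1 t - deriv (deriv S.β2) t) * ‖X‖ ^ 2
    + (deriv S.A1 t - deriv S.A2Deriv t) * ‖a‖ ^ 2 + 2 * S.A1 t * ⟪a, b⟫_ℝ
    + 2 * S.A2 t * (‖b‖ ^ 2 + ⟪a, c⟫_ℝ) + deriv S.B1 t * ‖b‖ ^ 2 + 2 * S.B1 t * ⟪b, c⟫_ℝ

lemma IsCoercive.exists_pos_mul_sq_le_dissipation
    (hδ : S.IsCoercive δ1 δ2 δ3 δ4 δ5 δ6 c1) :
    ∃ δ > 0, ∀ t, S.t0 ≤ t → ∀ a b c : ℝ,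
      δ * (a ^ 2 + b ^ 2 + c ^ 2) ≤
        S.A0 t * a ^ 2 + S.B0 t * b ^ 2 + S.C0 t * c ^ 2 := by
  refine ⟨min δ1 (min δ2 δ6), lt_min hδ.δ1_pos (lt_min hδ.δ2_pos hδ.δ6_pos),
    fun t ht a b c => ?_⟩
  rw [mul_add, mul_add]
  gcongr
  · exact (min_le_left _ _).trans (hδ.A0_ge t ht)
  · exact (min_le_right _ _).trans ((min_le_left _ _).trans (hδ.B0_ge t ht))
  · exact (min_le_right _ _).trans ((min_le_right _ _).trans (hδ.C0_ge t ht))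

section Lyapunov

variable {H : Type*} [NormedAddCommGroup H] [InnerProductSpace ℝ H]

lemma IsAdmissible.hasDerivWithinAt_lyapunov (hS : S.IsAdmissible) (ht : S.t0 ≤ t)
    {X a b c : ℝ → H} {s : Set ℝ} (hX : HasDerivWithinAt X (a t) s t)
    (ha : HasDerivWithinAt a (b t) s t) (hb : HasDerivWithinAt b (c t) s t) :
    HasDerivWithinAt (fun r => S.lyapunov r (X r) (a r) (b r))
      (S.lyapunovRate t (X t) (a t) (b t) (c t)) s t := by
  have hβ2 := (hS.β2_decreasingConvex.hasDerivAt t ht).hasDerivWithinAt (s := s)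
  have hβ2' := (hS.β2_diff t ht).2.hasDerivAt.hasDerivWithinAt (s := s)
  have hβ1 := (hS.β1_decreasingConvex.hasDerivAt t ht).hasDerivWithinAt (s := s)
  have hA1 := (hS.hasDerivAt_A1 ht).hasDerivWithinAt (s := s)
  have hA2 := (hS.A2_decreasingConvex.hasDerivAt t ht).hasDerivWithinAt (s := s)
  have hA2' := (hS.A2_decreasingConvex.differentiableAt_deriv t ht).hasDerivAt.hasDerivWithinAt
    (s := s)
  have hB1 := (hS.hasDerivAt_B1 ht).hasDerivWithinAt (s := s)
  refine ((((((ha.norm_sq.fun_add (hX.inner ℝ hb)).const_mul 2).fun_add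
    ((hβ2.const_mul 2).fun_mul (hX.inner ℝ ha))).fun_add
    ((hβ1.fun_sub hβ2').fun_mul hX.norm_sq)).fun_add
    ((hA1.fun_sub hA2').fun_mul ha.norm_sq)).fun_add
    ((hA2.const_mul 2).fun_mul (ha.inner ℝ hb))).fun_add (hB1.fun_mul hb.norm_sq)
    |>.congr_deriv ?_
  simp only [lyapunovRate, real_inner_self_eq_norm_sq]
  ring

lemma IsAdmissible.continuousOn_lyapunov (hS : S.IsAdmissible) {X a b : ℝ → H}
    (hX : ContinuousOn X (Set.Ici S.t0)) (ha : ContinuousOn a (Set.Ici S.t0))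
    (hb : ContinuousOn b (Set.Ici S.t0)) :
    ContinuousOn (fun r => S.lyapunov r (X r) (a r) (b r)) (Set.Ici S.t0) := by
  have hβ1 := hS.β1_decreasingConvex.continuousOn
  have hβ2 := hS.β2_decreasingConvex.continuousOn
  have hβ2' := hS.β2_decreasingConvex.continuousOn_deriv
  have hA1 := continuousOn_Ici_of_differentiableAt
    fun t ht => (hS.hasDerivAt_A1 (t := t) ht).differentiableAt
  have hA2 := hS.A2_decreasingConvex.continuousOn
  have hA2' := hS.A2_decreasingConvex.continuousOn_deriv
  have hB1 := hS.B1_decreasingConvex.continuousOn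
  simp only [lyapunov]
  fun_prop

lemma IsAdmissible.C0_mul_norm_sq_le (hS : S.IsAdmissible) (ht : S.t0 ≤ t) {X f v u : H}
    (hf : f = -(S.β0 t • u)) (hu : S.ω * ‖u‖ ^ 2 ≤ ⟪u, X + v⟫_ℝ) :
    S.C0 t * ‖f‖ ^ 2 + 2 * ⟪X, f⟫_ℝ ≤ S.β0 t / S.D t * ‖v‖ ^ 2 := by
  have hβ0 := hS.β0_pos t ht
  have hscale : S.C0 t * ‖f‖ ^ 2 = S.β0 t * (2 * S.ω - S.D t) * ‖u‖ ^ 2 := by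
    rw [hf, norm_neg, norm_smul, mul_pow, Real.norm_eq_abs, sq_abs, C0]
    field_simp
  rw [hscale, hf, inner_neg_right]
  linarith [norm_sq_le_of_quasiCocoercive hβ0.le (hS.D_pos t ht) hu]

-- Expanding the square in `C0_mul_norm_sq_le`, the cross terms are exactly those of the rate.
lemma IsAdmissible.lyapunovRate_le (hS : S.IsAdmissible) (ht : S.t0 ≤ t) {X a b c u : H}
    (heq : c + S.β2 t • b + S.β1 t • a + S.β0 t • u = 0)
    (hu : S.ω * ‖u‖ ^ 2 ≤ ⟪u, X + (S.lam1 t • a + S.lam2 t • b)⟫_ℝ) :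
    S.lyapunovRate t X a b c ≤ -(S.A0 t * ‖a‖ ^ 2 + S.B0 t * ‖b‖ ^ 2 + S.C0 t * ‖c‖ ^ 2) := by
  have hcoc := hS.C0_mul_norm_sq_le ht (eq_neg_of_add_eq_zero_left heq) hu
  have hX := mul_nonpos_of_nonpos_of_nonneg
    (sub_nonpos.2 ((hS.β1_sign t ht).1.trans (hS.β2_sign t ht).2)) (sq_nonneg ‖X‖)
  have ha := mul_nonpos_of_nonpos_of_nonneg (sub_nonpos.2 ((hS.deriv_A1_nonpos ht).trans
    (hS.A2_decreasingConvex.deriv_deriv_nonneg t ht))) (sq_nonneg ‖a‖)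
  have hb := mul_nonpos_of_nonpos_of_nonneg (hS.deriv_B1_nonpos ht) (sq_nonneg ‖b‖)
  have hA2 : S.A2 t = S.C0 t * S.β1 t := congrFun S.A2_eq_mul t
  have hB1 : S.B1 t = S.C0 t * S.β2 t := congrFun S.B1_eq_mul t
  have hA1 : S.A1 t = S.C0 t * S.β1 t * S.β2 t - S.β0 t / S.D t * (S.lam1 t * S.lam2 t) - 3 := by
    rw [A1, C0]; ring
  have hA0 : S.A0 t = S.C0 t * S.β1 t ^ 2 - S.β0 t / S.D t * S.lam1 t ^ 2 - 2 * S.β2 t := by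
    rw [A0, C0]; ring
  have hB0 : S.B0 t =
      S.C0 t * (S.β2 t ^ 2 - 2 * S.β1 t) - S.β0 t / S.D t * S.lam2 t ^ 2 := rfl
  simp only [← real_inner_self_eq_norm_sq, inner_add_left, inner_add_right, real_inner_smul_left,
    real_inner_smul_right, real_inner_comm a b, real_inner_comm a c, real_inner_comm b c]
    at hcoc hX ha hb
  simp only [lyapunovRate, hA2, hB1, hA1, hA0, hB0, ← real_inner_self_eq_norm_sq]
  linarith

lemma IsCoercive.exists_pos_mul_norm_sq_le_lyapunov
    (hδ : S.IsCoercive δ1 δ2 δ3 δ4 δ5 δ6 c1) (hS : S.IsAdmissible) :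
    ∃ ε > 0, ∀ t, S.t0 ≤ t → ∀ X a b : H,
      2 * S.β2 t * ⟪X, a⟫_ℝ + ε * (‖X‖ ^ 2 + ‖a‖ ^ 2 + ‖b‖ ^ 2) ≤ S.lyapunov t X a b := by
  obtain ⟨ε, hε, hle⟩ := exists_pos_mul_norm_sq_le (H := H) (hδ.c1_pos hS) hδ.δ3_pos hδ.gap
  refine ⟨ε, hε, fun t ht X a b => ?_⟩
  have hA2 : |S.A2 t| ≤ δ4 :=
    (abs_of_nonneg (hS.A2_decreasingConvex.nonneg t ht)).trans_le (hδ.A2_le t ht)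
  have hX : c1 ≤ S.β1 t - deriv S.β2 t := by
    linarith [hδ.isGLB_β1.1 ⟨t, ht, rfl⟩, (hS.β2_sign t ht).1]
  have ha : δ3 ≤ 2 + (S.A1 t - S.A2Deriv t) := by
    linarith [hδ.A1_ge t ht, hS.A2_decreasingConvex.deriv_nonpos t ht]
  have hX' := mul_le_mul_of_nonneg_right hX (sq_nonneg ‖X‖)
  have ha' := mul_le_mul_of_nonneg_right ha (sq_nonneg ‖a‖)
  have hb' := mul_le_mul_of_nonneg_right (hδ.B1_ge t ht) (sq_nonneg ‖b‖)
  rw [lyapunov]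
  linarith [hle X a b (S.A2 t) hA2]

end Lyapunov

/-- `x` solves the system everywhere on `[t0, ∞)`, with continuous first, second and third
derivatives `v`, `w`, `j`. Only right derivatives are required, since `t0` is an endpoint and the
coefficients need not be regular before it. -/
structure IsRightSolution {H : Type*} [NormedAddCommGroup H] [NormedSpace ℝ H]
    (S : ThirdOrderCoefficients) (U : H → H) (x v w j : ℝ → H) : Prop where
  continuousOn_position : ContinuousOn x (Set.Ici S.t0)
  continuousOn_velocity : ContinuousOn v (Set.Ici S.t0)
  continuousOn_acceleration : ContinuousOn w (Set.Ici S.t0)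
  continuousOn_jerk : ContinuousOn j (Set.Ici S.t0)
  hasDeriv_position : ∀ t, S.t0 ≤ t → HasDerivWithinAt x (v t) (Set.Ici t) t
  hasDeriv_velocity : ∀ t, S.t0 ≤ t → HasDerivWithinAt v (w t) (Set.Ici t) t
  hasDeriv_acceleration : ∀ t, S.t0 ≤ t → HasDerivWithinAt w (j t) (Set.Ici t) t
  equation : ∀ t, S.t0 ≤ t → j t + S.β2 t • w t + S.β1 t • v t
    + S.β0 t • U (x t + S.lam1 t • v t + S.lam2 t • w t) = 0

section Trajectory

variable {H : Type*} [NormedAddCommGroup H] [InnerProductSpace ℝ H] {U : H → H}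
  {x v w j : ℝ → H}

lemma IsAdmissible.exists_isRightSolution [CompleteSpace H] (hS : S.IsAdmissible)
    (hU : Continuous U)
    (hx : IsStrongGlobalSolution S.t0 S.β0 S.β1 S.β2 S.lam1 S.lam2 U x) :
    ∃ j, S.IsRightSolution U x (deriv x) (deriv (deriv x)) j ∧
      ∀ᵐ t, S.t0 ≤ t → deriv (deriv (deriv x)) t = j t := by
  obtain ⟨hx0, hx1, hx2, heq⟩ := hx
  let j : ℝ → H := fun t => -(S.β2 t • deriv (deriv x) t + S.β1 t • deriv x t
    + S.β0 t • U (x t + S.lam1 t • deriv x t + S.lam2 t • deriv (deriv x) t))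
  have hj : ContinuousOn j (Set.Ici S.t0) := by
    have hβ0 := continuousOn_Ici_of_differentiableAt fun t ht => (hS.β0_diff t ht).1
    have hβ1 := hS.β1_decreasingConvex.continuousOn
    have hβ2 := hS.β2_decreasingConvex.continuousOn
    have hl1 := continuousOn_Ici_of_differentiableAt fun t ht => (hS.lam1_mono t ht).1
    have hl2 := continuousOn_Ici_of_differentiableAt fun t ht => (hS.lam2_mono t ht).1
    have hx0' := hx0.continuousOn
    have hx1' := hx1.continuousOn
    have hx2' := hx2.continuousOn
    fun_prop
  have hae : ∀ᵐ t, S.t0 ≤ t → deriv (deriv (deriv x)) t = j t := by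
    filter_upwards [heq] with t ht hle
    exact eq_neg_of_add_eq_zero_left (by simpa only [add_assoc] using ht hle)
  refine ⟨j, ⟨hx0.continuousOn, hx1.continuousOn, hx2.continuousOn, hj,
    fun t ht => hx0.hasDerivWithinAt_Ici_of_ae_deriv_eq hx1.continuousOn (by simp) ht,
    fun t ht => hx1.hasDerivWithinAt_Ici_of_ae_deriv_eq hx2.continuousOn (by simp) ht,
    fun t ht => hx2.hasDerivWithinAt_Ici_of_ae_deriv_eq hj hae ht, fun t _ => ?_⟩, hae⟩
  simp only [j]
  abel

namespace IsRightSolution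

lemma lyapunov_add_integral_le (hsol : S.IsRightSolution U x v w j) (hS : S.IsAdmissible) {z : H}
    (hz : ∀ y, S.ω * ‖U y‖ ^ 2 ≤ ⟪U y, y - z⟫_ℝ) {δ : ℝ}
    (hdiss : ∀ t, S.t0 ≤ t → ∀ a b c : ℝ, δ * (a ^ 2 + b ^ 2 + c ^ 2) ≤
      S.A0 t * a ^ 2 + S.B0 t * b ^ 2 + S.C0 t * c ^ 2) (ht : S.t0 ≤ t) :
    S.lyapunov t (x t - z) (v t) (w t)
      + δ * ∫ s in S.t0..t, (‖v s‖ ^ 2 + ‖w s‖ ^ 2 + ‖j s‖ ^ 2) ≤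
      S.lyapunov S.t0 (x S.t0 - z) (v S.t0) (w S.t0) := by
  have hv := hsol.continuousOn_velocity
  have hw := hsol.continuousOn_acceleration
  have hj := hsol.continuousOn_jerk
  rw [← intervalIntegral.integral_const_mul]
  refine add_integral_le_of_hasDerivWithinAt_le_neg ht
    (hS.continuousOn_lyapunov (hsol.continuousOn_position.fun_sub continuousOn_const) hv hw)
    (by fun_prop)
    (fun s hs => hS.hasDerivWithinAt_lyapunov hs ((hsol.hasDeriv_position s hs).sub_const z)
      (hsol.hasDeriv_velocity s hs) (hsol.hasDeriv_acceleration s hs)) fun s hs => ?_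
  refine (hS.lyapunovRate_le hs (hsol.equation s hs) ?_).trans (neg_le_neg (hdiss s hs _ _ _))
  refine (hz _).trans_eq (congrArg _ ?_)
  abel

lemma exists_energy_le (hsol : S.IsRightSolution U x v w j) (hS : S.IsAdmissible)
    (hδ : S.IsCoercive δ1 δ2 δ3 δ4 δ5 δ6 c1) {z : H}
    (hz : ∀ y, S.ω * ‖U y‖ ^ 2 ≤ ⟪U y, y - z⟫_ℝ) :
    ∃ ε > 0, ∃ δ > 0, ∃ M, ∀ t, S.t0 ≤ t →
      ε * (‖x t - z‖ ^ 2 + ‖v t‖ ^ 2 + ‖w t‖ ^ 2)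
        + δ * ∫ s in S.t0..t, (‖v s‖ ^ 2 + ‖w s‖ ^ 2 + ‖j s‖ ^ 2) ≤ M := by
  obtain ⟨ε, hε, hlower⟩ := hδ.exists_pos_mul_norm_sq_le_lyapunov (H := H) hS
  obtain ⟨δ, hδpos, hdiss⟩ := hδ.exists_pos_mul_sq_le_dissipation
  refine ⟨ε / 2, half_pos hε, δ, hδpos, ?_⟩
  refine exists_forall_mul_add_le_of_inner_add_le
    (hsol.continuousOn_position.fun_sub continuousOn_const)
    (fun t ht => (hsol.hasDeriv_position t ht).sub_const z) hε (fun t ht => (hS.β2_pos t ht).le)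
    (fun t ht => hS.β2_decreasingConvex.le_initial ht)
    (fun t _ => le_add_of_nonneg_right (sq_nonneg _)) (fun t ht => ?_)
    (K := S.lyapunov S.t0 (x S.t0 - z) (v S.t0) (w S.t0)) fun t ht => ?_
  · exact mul_nonneg hδpos.le (intervalIntegral.integral_nonneg ht fun s _ => by positivity)
  · linarith [hlower t ht (x t - z) (v t) (w t), hsol.lyapunov_add_integral_le hS hz hdiss ht]

lemma exists_norm_le (hsol : S.IsRightSolution U x v w j) (hS : S.IsAdmissible)
    (hδ : S.IsCoercive δ1 δ2 δ3 δ4 δ5 δ6 c1) {z : H}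
    (hz : ∀ y, S.ω * ‖U y‖ ^ 2 ≤ ⟪U y, y - z⟫_ℝ) :
    ∃ M, ∀ t, S.t0 ≤ t → ‖x t‖ ≤ M ∧ ‖v t‖ ≤ M ∧ ‖w t‖ ≤ M := by
  obtain ⟨ε, hε, δ, hδpos, M, hM⟩ := hsol.exists_energy_le hS hδ hz
  refine ⟨‖z‖ + √(M / ε), fun t ht => ?_⟩
  have hint : 0 ≤ δ * ∫ s in S.t0..t, (‖v s‖ ^ 2 + ‖w s‖ ^ 2 + ‖j s‖ ^ 2) :=
    mul_nonneg hδpos.le (intervalIntegral.integral_nonneg ht fun s _ => by positivity)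
  have hsum : ‖x t - z‖ ^ 2 + ‖v t‖ ^ 2 + ‖w t‖ ^ 2 ≤ M / ε :=
    (le_div_iff₀' hε).2 (by linarith [hM t ht])
  have hX : ‖x t - z‖ ≤ √(M / ε) :=
    Real.le_sqrt_of_sq_le (by linarith [sq_nonneg ‖v t‖, sq_nonneg ‖w t‖])
  refine ⟨(norm_le_norm_add_norm_sub' _ _).trans (add_le_add_right hX _),
    le_add_of_nonneg_of_le (norm_nonneg z) (Real.le_sqrt_of_sq_le ?_),
    le_add_of_nonneg_of_le (norm_nonneg z) (Real.le_sqrt_of_sq_le ?_)⟩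
  · linarith [sq_nonneg ‖x t - z‖, sq_nonneg ‖w t‖]
  · linarith [sq_nonneg ‖x t - z‖, sq_nonneg ‖v t‖]

lemma integrableOn_sum_norm_sq (hsol : S.IsRightSolution U x v w j) (hS : S.IsAdmissible)
    (hδ : S.IsCoercive δ1 δ2 δ3 δ4 δ5 δ6 c1) {z : H}
    (hz : ∀ y, S.ω * ‖U y‖ ^ 2 ≤ ⟪U y, y - z⟫_ℝ) :
    IntegrableOn (fun t => ‖v t‖ ^ 2 + ‖w t‖ ^ 2 + ‖j t‖ ^ 2) (Set.Ici S.t0) := by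
  obtain ⟨ε, hε, δ, hδpos, M, hM⟩ := hsol.exists_energy_le hS hδ hz
  have hv := hsol.continuousOn_velocity
  have hw := hsol.continuousOn_acceleration
  have hj := hsol.continuousOn_jerk
  refine integrableOn_Ici_of_intervalIntegral_le (M := M / δ) (by fun_prop)
    (fun t _ => by positivity) fun t ht => ?_
  have henergy : 0 ≤ ε * (‖x t - z‖ ^ 2 + ‖v t‖ ^ 2 + ‖w t‖ ^ 2) := by positivity
  exact (le_div_iff₀' hδpos).2 (by linarith [hM t ht])

lemma exists_norm_apply_le (hsol : S.IsRightSolution U x v w j) (hS : S.IsAdmissible)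
    (hδ : S.IsCoercive δ1 δ2 δ3 δ4 δ5 δ6 c1)
    (hLip : ∀ s, Bornology.IsBounded s → ∃ K, LipschitzOnWith K U s) {M : ℝ}
    (hM : ∀ t, S.t0 ≤ t → ‖x t‖ ≤ M ∧ ‖v t‖ ≤ M ∧ ‖w t‖ ≤ M) :
    ∃ k, ∀ t, S.t0 ≤ t → ‖U (x t)‖ ≤ k * (‖v t‖ + ‖w t‖ + ‖j t‖) := by
  obtain ⟨Λ, hΛ⟩ := hδ.exists_lam_le hS
  have hΛ0 : 0 ≤ Λ := (hS.lam1_nonneg _ le_rfl).trans (hΛ _ le_rfl).1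
  have hM0 : 0 ≤ M := (norm_nonneg _).trans (hM _ le_rfl).1
  obtain ⟨K, hK⟩ := hLip _ (Metric.isBounded_closedBall (x := 0) (r := M + Λ * (M + M)))
  refine ⟨(1 + max (S.β1 S.t0) (S.β2 S.t0)) / S.β0 S.t0 + K * Λ, fun t ht => ?_⟩
  obtain ⟨hxM, hvM, hwM⟩ := hM t ht
  have hpert : ‖S.lam1 t • v t + S.lam2 t • w t‖ ≤ Λ * (‖v t‖ + ‖w t‖) := norm_smul_add_smul_le
    ((abs_of_nonneg (hS.lam1_nonneg t ht)).trans_le (hΛ t ht).1)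
    ((abs_of_nonneg (hS.lam2_nonneg t ht)).trans_le (hΛ t ht).2) _ _
  have hforce := norm_le_of_add_smul_eq_zero (hS.β0_pos _ le_rfl) (hS.β0_initial_le ht)
    ((abs_of_pos (hS.β1_pos t ht)).trans_le
      (le_max_of_le_left (hS.β1_decreasingConvex.le_initial ht)))
    ((abs_of_pos (hS.β2_pos t ht)).trans_le
      (le_max_of_le_right (hS.β2_decreasingConvex.le_initial ht))) (hsol.equation t ht)
  rw [add_assoc (x t)] at hforce
  have hxball : x t ∈ Metric.closedBall 0 (M + Λ * (M + M)) :=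
    mem_closedBall_zero_iff.2 (hxM.trans (le_add_of_nonneg_right (by positivity)))
  have hφball : x t + (S.lam1 t • v t + S.lam2 t • w t) ∈
      Metric.closedBall 0 (M + Λ * (M + M)) := by
    rw [mem_closedBall_zero_iff]
    grw [norm_add_le, hpert, hxM, hvM, hwM]
  calc ‖U (x t)‖
      ≤ ‖U (x t + (S.lam1 t • v t + S.lam2 t • w t))‖
        + ‖U (x t) - U (x t + (S.lam1 t • v t + S.lam2 t • w t))‖ :=
        norm_le_norm_add_norm_sub' _ _
    _ ≤ (1 + max (S.β1 S.t0) (S.β2 S.t0)) / S.β0 S.t0 * (‖v t‖ + ‖w t‖ + ‖j t‖)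
        + K * (Λ * (‖v t‖ + ‖w t‖ + ‖j t‖)) := by
      gcongr
      refine (hK.norm_sub_le hxball hφball).trans ?_
      rw [sub_add_cancel_left, norm_neg]
      gcongr
      exact hpert.trans (mul_le_mul_of_nonneg_left (le_add_of_nonneg_right (norm_nonneg _)) hΛ0)
    _ = _ := by ring

lemma exists_norm_apply_sq_le (hsol : S.IsRightSolution U x v w j) (hS : S.IsAdmissible)
    (hδ : S.IsCoercive δ1 δ2 δ3 δ4 δ5 δ6 c1)
    (hLip : ∀ s, Bornology.IsBounded s → ∃ K, LipschitzOnWith K U s) {M : ℝ}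
    (hM : ∀ t, S.t0 ≤ t → ‖x t‖ ≤ M ∧ ‖v t‖ ≤ M ∧ ‖w t‖ ≤ M) :
    ∃ k, ∀ t, S.t0 ≤ t → ‖U (x t)‖ ^ 2 ≤ k * (‖v t‖ ^ 2 + ‖w t‖ ^ 2 + ‖j t‖ ^ 2) := by
  obtain ⟨k, hk⟩ := hsol.exists_norm_apply_le hS hδ hLip hM
  refine ⟨k ^ 2 * 3, fun t ht => ?_⟩
  calc ‖U (x t)‖ ^ 2 ≤ (k * (‖v t‖ + ‖w t‖ + ‖j t‖)) ^ 2 := by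
        gcongr
        exact hk t ht
    _ ≤ k ^ 2 * 3 * (‖v t‖ ^ 2 + ‖w t‖ ^ 2 + ‖j t‖ ^ 2) := by
        rw [mul_pow, mul_assoc]
        gcongr
        linarith [sq_nonneg (‖v t‖ - ‖w t‖), sq_nonneg (‖v t‖ - ‖j t‖),
          sq_nonneg (‖w t‖ - ‖j t‖)]

end IsRightSolution
end Trajectory
end ThirdOrderCoefficients

theorem stmt3_general
    {H : Type*} [NormedAddCommGroup H] [InnerProductSpace ℝ H] [CompleteSpace H]
    (S : ThirdOrderCoefficients) (hS : S.IsAdmissible) {δ1 δ2 δ3 δ4 δ5 δ6 c1 : ℝ}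
    (hδ : S.IsCoercive δ1 δ2 δ3 δ4 δ5 δ6 c1)
    {U : H → H} (hLip : ∀ s, Bornology.IsBounded s → ∃ K, LipschitzOnWith K U s)
    {z : H} (hz : ∀ y, S.ω * ‖U y‖ ^ 2 ≤ ⟪U y, y - z⟫_ℝ)
    {x : ℝ → H} (hx : IsStrongGlobalSolution S.t0 S.β0 S.β1 S.β2 S.lam1 S.lam2 U x) :
    (∃ M : ℝ, ∀ t, S.t0 ≤ t →
      ‖x t‖ ≤ M ∧ ‖deriv x t‖ ≤ M ∧ ‖deriv (deriv x) t‖ ≤ M) ∧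
    IntegrableOn (fun t => ‖deriv x t‖ ^ 2) (Set.Ici S.t0) ∧
    IntegrableOn (fun t => ‖deriv (deriv x) t‖ ^ 2) (Set.Ici S.t0) ∧
    IntegrableOn (fun t => ‖deriv (deriv (deriv x)) t‖ ^ 2) (Set.Ici S.t0) ∧
    IntegrableOn (fun t => ‖U (x t)‖ ^ 2) (Set.Ici S.t0) := by
  have hU : Continuous U := LocallyLipschitz.continuous fun y =>
    let ⟨K, hK⟩ := hLip _ (Metric.isBounded_ball (x := y) (r := 1))
    ⟨K, _, Metric.ball_mem_nhds y one_pos, hK⟩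
  obtain ⟨j, hsol, hj⟩ := hS.exists_isRightSolution hU hx
  have hQ := hsol.integrableOn_sum_norm_sq hS hδ hz
  obtain ⟨M, hM⟩ := hsol.exists_norm_le hS hδ hz
  obtain ⟨k, hk⟩ := hsol.exists_norm_apply_sq_le hS hδ hLip hM
  refine ⟨⟨M, hM⟩,
    integrableOn_norm_sq_of_le_mul hsol.continuousOn_velocity hQ (k := 1) fun t _ => ?_,
    integrableOn_norm_sq_of_le_mul hsol.continuousOn_acceleration hQ (k := 1) fun t _ => ?_,
    (integrableOn_norm_sq_of_le_mul hsol.continuousOn_jerk hQ (k := 1) fun t _ => ?_).congr ?_,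
    integrableOn_norm_sq_of_le_mul (hU.comp_continuousOn hsol.continuousOn_position) hQ hk⟩
  · linarith [sq_nonneg ‖deriv (deriv x) t‖, sq_nonneg ‖j t‖]
  · linarith [sq_nonneg ‖deriv x t‖, sq_nonneg ‖j t‖]
  · linarith [sq_nonneg ‖deriv x t‖, sq_nonneg ‖deriv (deriv x) t‖]
  · filter_upwards [ae_restrict_of_ae hj, ae_restrict_mem measurableSet_Ici] with t hjt ht
    rw [hjt ht]

theorem stmt3
    {H : Type*} [NormedAddCommGroup H] [InnerProductSpace ℝ H] [CompleteSpace H]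
    (U : H → H) (ωu Lu t0 : ℝ) (hωu : 0 < ωu) (hLu : 0 < Lu) (ht0 : 0 ≤ t0)
    (hquasi : ∀ x xs : H, U xs = 0 → ωu * ‖U x‖ ^ 2 ≤ ⟪U x, x - xs⟫_ℝ)
    (hLip : ∀ x y : H, ‖U x - U y‖ ≤ Lu * ‖x - y‖)
    (hZ : ∃ z : H, U z = 0)
    (β0 β1 β2 lam1 lam2 D : ℝ → ℝ)
    (hβ0pos : ∀ t, t0 ≤ t → 0 < β0 t)
    (hβ1pos : ∀ t, t0 ≤ t → 0 < β1 t)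
    (hβ2pos : ∀ t, t0 ≤ t → 0 < β2 t)
    (hβ0d : ∀ t, t0 ≤ t → DifferentiableAt ℝ β0 t ∧ DifferentiableAt ℝ (deriv β0) t)
    (hβ1d : ∀ t, t0 ≤ t → DifferentiableAt ℝ β1 t ∧ DifferentiableAt ℝ (deriv β1) t)
    (hβ2d : ∀ t, t0 ≤ t → DifferentiableAt ℝ β2 t ∧ DifferentiableAt ℝ (deriv β2) t)
    (hβ2sign : ∀ t, t0 ≤ t → deriv β2 t ≤ 0 ∧ 0 ≤ deriv (deriv β2) t)
    (hβ1sign : ∀ t, t0 ≤ t → deriv β1 t ≤ 0 ∧ 0 ≤ deriv (deriv β1) t)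
    (hβ0sign : ∀ t, t0 ≤ t → 0 ≤ deriv β0 t ∧ deriv (deriv β0) t ≤ 0)
    (hlam1nn : ∀ t, t0 ≤ t → 0 ≤ lam1 t)
    (hlam2nn : ∀ t, t0 ≤ t → 0 ≤ lam2 t)
    (hlam1d : ∀ t, t0 ≤ t → DifferentiableAt ℝ lam1 t ∧ 0 ≤ deriv lam1 t)
    (hlam2d : ∀ t, t0 ≤ t → DifferentiableAt ℝ lam2 t ∧ 0 ≤ deriv lam2 t)
    (hDpos : ∀ t, t0 ≤ t → 0 < D t)
    (hDd : ∀ t, t0 ≤ t → DifferentiableAt ℝ D t ∧ DifferentiableAt ℝ (deriv D) t)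
    (hDsup : ∃ Dbar : ℝ, (∀ t, t0 ≤ t → D t ≤ Dbar) ∧ Dbar < 2 * ωu)
    (hDlow : ∀ t, t0 ≤ t → β0 t ^ 2 * lam1 t * lam2 t / (β1 t * β2 t) ≤ D t ^ 2)
    (hDsign : ∀ t, t0 ≤ t → 0 ≤ deriv D t ∧ deriv (deriv D) t ≤ 0)
    (δ1 δ2 δ3 δ4 δ5 δ6 c1 : ℝ)
    (hδ1 : 0 < δ1) (hδ2 : 0 < δ2) (hδ3 : 0 < δ3)
    (hδ4 : 0 < δ4) (hδ5 : 0 < δ5) (hδ6 : 0 < δ6)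
    (hc1 : IsGLB (β1 '' Set.Ici t0) c1)
    (hA0 : ∀ t, t0 ≤ t →
      δ1 ≤ (2 * ωu - D t) * β1 t ^ 2 / β0 t - β0 t / D t * lam1 t ^ 2 - 2 * β2 t)
    (hB0 : ∀ t, t0 ≤ t →
      δ2 ≤ (2 * ωu - D t) / β0 t * (β2 t ^ 2 - 2 * β1 t) - β0 t / D t * lam2 t ^ 2)
    (hA1 : ∀ t, t0 ≤ t →
      δ3 ≤ ((2 * ωu - D t) * β1 t * β2 t / β0 t - β0 t / D t * (lam1 t * lam2 t) - 3) + 2)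
    (hA2 : ∀ t, t0 ≤ t → (2 * ωu - D t) * β1 t / β0 t ≤ δ4)
    (hB1 : ∀ t, t0 ≤ t → δ5 ≤ (2 * ωu - D t) * β2 t / β0 t)
    (hC0 : ∀ t, t0 ≤ t → δ6 ≤ (2 * ωu - D t) / β0 t)
    (hkey : 1 / c1 < δ5 - δ4 ^ 2 / δ3)
    (x : ℝ → H) (hx : IsStrongGlobalSolution t0 β0 β1 β2 lam1 lam2 U x) :
    (∃ M : ℝ, ∀ t, t0 ≤ t →
      ‖x t‖ ≤ M ∧ ‖deriv x t‖ ≤ M ∧ ‖deriv (deriv x) t‖ ≤ M) ∧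
    IntegrableOn (fun t => ‖deriv x t‖ ^ 2) (Set.Ici t0) ∧
    IntegrableOn (fun t => ‖deriv (deriv x) t‖ ^ 2) (Set.Ici t0) ∧
    IntegrableOn (fun t => ‖deriv (deriv (deriv x)) t‖ ^ 2) (Set.Ici t0) ∧
    IntegrableOn (fun t => ‖U (x t)‖ ^ 2) (Set.Ici t0) := by
  obtain ⟨z, hz⟩ := hZ
  obtain ⟨Dbar, hDle, hDbar⟩ := hDsup
  have hU : LipschitzWith Lu.toNNReal U :=
    .of_dist_le' (by simpa only [dist_eq_norm] using hLip)
  exact stmt3_general ⟨ωu, t0, β0, β1, β2, lam1, lam2, D⟩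
    ⟨hβ0pos, hβ1pos, hβ2pos, hβ0d, hβ1d, hβ2d, hβ2sign, hβ1sign, hβ0sign, hlam1nn, hlam2nn,
      hlam1d, hlam2d, hDpos, fun t ht => (hDle t ht).trans_lt hDbar, hDd, hDlow, hDsign⟩
    ⟨hδ1, hδ2, hδ3, hδ6, hc1, hA0, hB0, hA1, hA2, hB1, hC0, hkey⟩
    (fun s _ => ⟨_, hU.lipschitzOnWith⟩) (fun y => hquasi y z hz) hx
end

section
/- Let U : H → H be L_u-Lipschitz continuous and ρ-strongly monotone with respect to its zero set, with Z(U) nonempty, and set κ = ρ/L_u². Let β0, β1, β2, λ1, λ2 be constants satisfying: β2 > max{4 + 12/(ρκ), 6, 16/(ρκ)}; max{4(β2−3), (8/(ρκ))(β2−3)} < β1 < β2(β2−2)/2; (2/ρ)(−2β2 + β1 + 4) < β0 < (κβ1/2)·min{(−2β2 + β1 + 4)/(2(β2−3)), (β2−4)/3}; 0 ≤ λ1 < (−8 + ρβ0 − 2β1 + 4β2)/(2ρβ0); β0(2/κ − ρ)λ1² + 2β0ρλ2 < (κβ1/(2β0))(4 + β1 − 2β2) − 2(β2−3); 0 ≤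 λ2 < (12 + β1 − 4β2)/(4ρβ0); β0(2/κ − ρ)λ1λ2 < (κβ1/(2β0))(β2−4) − 3; and β0(2/κ − ρ)λ2² < (κ/(2β0))(β2² − 2β2 − 2β1). Then U has a unique zero x*, and every three-times differentiable trajectory x : [t0,∞) → H satisfying x'''(t) + β2 x''(t) + β1 x'(t) + β0 U(x(t) + λ1 x'(t) + λ2 x''(t)) = 0 for all t ≥ t0 satisfies ‖x(t) − x*‖² ≤ C e^{−2t} for all t ≥ t0, for some constant C > 0. -/
open InnerProductSpace

open Set Filter
open scoped Topology

/-!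
Write `y = x - x*`. Strong monotonicity and the Lipschitz bound turn the equation into a scalar
inequality `P(d/dt) ‖y‖² + Q(d/dt) ‖y'‖² + R(d/dt) ‖y''‖² ≤ 0` with polynomials `P`, `Q`, `R` of
degrees `3`, `2`, `1`. The conditions on the parameters ensure that the shifted polynomials
`P(s - 2)`, `Q(s - 2)`, `R(s - 2)` have nonnegative coefficients, positive where needed. Splitting
off one first-order factor of `P` at a time, nonnegativity of the three energies reduces the
inequality to Grönwall's, and gives `‖y‖² = O(e^{-2t})`.
-/

section DifferentialInequalities

variable {t₀ σ : ℝ}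

lemma le_mul_exp_of_deriv_add_mul_nonpos {f f' : ℝ → ℝ} {μ : ℝ}
    (hf : ∀ t ∈ Ici t₀, HasDerivWithinAt f (f' t) (Ici t₀) t)
    (h : ∀ t ∈ Ici t₀, f' t + μ * f t ≤ 0) {t : ℝ} (ht : t₀ ≤ t) :
    f t ≤ f t₀ * Real.exp (-μ * (t - t₀)) := by
  rw [← gronwallBound_ε0]
  refine le_gronwallBound_of_liminf_deriv_right_le (f' := f')
    (fun s hs => ((hf s hs.1).continuousWithinAt).mono Icc_subset_Ici_self)
    (fun s hs r hr => ((hf s hs.1).mono (Ici_subset_Ici.2 hs.1)).liminf_right_slope_le hr)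
    le_rfl (fun s hs => ?_) t (right_mem_Icc.2 ht)
  linarith [h s hs.1]

lemma exists_le_mul_exp_of_deriv_add_mul_le {f f' : ℝ → ℝ} {μ K : ℝ} (hσμ : σ < μ)
    (hf : ∀ t ∈ Ici t₀, HasDerivWithinAt f (f' t) (Ici t₀) t)
    (h : ∀ t ∈ Ici t₀, f' t + μ * f t ≤ K * Real.exp (-σ * t)) :
    ∃ C, ∀ t ∈ Ici t₀, f t ≤ C * Real.exp (-σ * t) := by
  have hgap : 0 < μ - σ := sub_pos.2 hσμ
  -- `A e^{-σt}` solves `g' + μ g = K e^{-σt}`, so subtracting it makes the inequality homogeneous.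
  let A : ℝ := K / (μ - σ)
  have hAK : A * (μ - σ) = K := div_mul_cancel₀ K hgap.ne'
  have hexp (t : ℝ) : HasDerivAt (fun s => A * Real.exp (-σ * s))
      (A * (Real.exp (-σ * t) * -σ)) t :=
    (hasDerivAt_const_mul (-σ)).exp.const_mul A
  let B : ℝ := f t₀ - A * Real.exp (-σ * t₀)
  have hdecay (t : ℝ) (ht : t₀ ≤ t) :
      f t - A * Real.exp (-σ * t) ≤ B * Real.exp (-μ * (t - t₀)) := by
    refine le_mul_exp_of_deriv_add_mul_nonpos
      (fun s hs => (hf s hs).fun_sub (hexp s).hasDerivWithinAt) (fun s hs => ?_) ht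
    linear_combination h s hs - Real.exp (-σ * s) * hAK
  refine ⟨A + |B| * Real.exp (σ * t₀), fun t ht => ?_⟩
  have hrate : Real.exp (-μ * (t - t₀)) ≤ Real.exp (σ * t₀) * Real.exp (-σ * t) := by
    rw [← Real.exp_add, Real.exp_le_exp]
    linarith [mul_nonneg hgap.le (sub_nonneg.2 ht)]
  calc f t ≤ A * Real.exp (-σ * t) + B * Real.exp (-μ * (t - t₀)) :=
        sub_le_iff_le_add'.1 (hdecay t ht)
    _ ≤ A * Real.exp (-σ * t) + |B| * (Real.exp (σ * t₀) * Real.exp (-σ * t)) := by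
        gcongr
        exact le_abs_self B
    _ = (A + |B| * Real.exp (σ * t₀)) * Real.exp (-σ * t) := by ring

/-- The hypotheses are sign conditions on the coefficients of `P(s - σ)` and `Q(s - σ)`, where
`P(s) = s² + a₁ s + a₀` and `Q(s) = b₁ s + b₀`. -/
lemma exists_le_mul_exp_of_second_order_le {p p' p'' q q' : ℝ → ℝ} {a₁ a₀ b₁ b₀ K : ℝ}
    (hp : ∀ t ∈ Ici t₀, HasDerivWithinAt p (p' t) (Ici t₀) t)
    (hp' : ∀ t ∈ Ici t₀, HasDerivWithinAt p' (p'' t) (Ici t₀) t)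
    (hq : ∀ t ∈ Ici t₀, HasDerivWithinAt q (q' t) (Ici t₀) t)
    (hp_nonneg : ∀ t ∈ Ici t₀, 0 ≤ p t) (hq_nonneg : ∀ t ∈ Ici t₀, 0 ≤ q t)
    (ha₁ : 0 < a₁ - 2 * σ) (ha₀ : 0 < a₀ - σ * a₁ + σ ^ 2)
    (hb₁ : 0 ≤ b₁) (hb₀ : 0 < b₀ - σ * b₁)
    (h : ∀ t ∈ Ici t₀,
      p'' t + a₁ * p' t + a₀ * p t + (b₁ * q' t + b₀ * q t) ≤ K * Real.exp (-σ * t)) :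
    ∃ C, ∀ t ∈ Ici t₀, p t ≤ C * Real.exp (-σ * t) := by
  -- All three conditions hold strictly at `μ = σ`, hence also slightly to the right of `σ`.
  obtain ⟨μ, ⟨hμ₁, hμ₀, hμb⟩, hσμ⟩ :
      ∃ μ, (σ < a₁ - μ ∧ μ * (a₁ - μ) < a₀ ∧ μ * b₁ < b₀) ∧ σ < μ := by
    have hnear : ∀ᶠ μ in 𝓝 σ, σ < a₁ - μ ∧ μ * (a₁ - μ) < a₀ ∧ μ * b₁ < b₀ := by
      refine .and ?_ (.and ?_ ?_)
      · exact continuousAt_const.eventually_lt (by fun_prop) (by linarith)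
      · exact ContinuousAt.eventually_lt (by fun_prop) continuousAt_const (by linarith)
      · exact ContinuousAt.eventually_lt (by fun_prop) continuousAt_const (by linarith)
    exact ((hnear.filter_mono nhdsWithin_le_nhds).and
      (self_mem_nhdsWithin : Ioi σ ∈ 𝓝[>] σ)).exists
  obtain ⟨K', hK'⟩ : ∃ K', ∀ t ∈ Ici t₀,
      p' t + (a₁ - μ) * p t + b₁ * q t ≤ K' * Real.exp (-σ * t) := by
    refine exists_le_mul_exp_of_deriv_add_mul_le (K := K) hσμ (fun t ht =>
      ((hp' t ht).fun_add ((hp t ht).const_mul (a₁ - μ))).fun_add ((hq t ht).const_mul b₁))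
      (fun t ht => ?_)
    have hp_drop : μ * (a₁ - μ) * p t ≤ a₀ * p t :=
      mul_le_mul_of_nonneg_right hμ₀.le (hp_nonneg t ht)
    have hq_drop : μ * b₁ * q t ≤ b₀ * q t := mul_le_mul_of_nonneg_right hμb.le (hq_nonneg t ht)
    linarith [h t ht]
  refine exists_le_mul_exp_of_deriv_add_mul_le (K := K') hμ₁ hp (fun t ht => ?_)
  linarith [hK' t ht, mul_nonneg hb₁ (hq_nonneg t ht)]

/-- The hypotheses are sign conditions on the coefficients of `P(s - σ)`, `Q(s - σ)` and `R(s - σ)`,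
where `P(s) = s³ + a₂ s² + a₁ s + a₀`, `Q(s) = b₂ s² + b₁ s + b₀` and `R(s) = c₁ s + c₀`. -/
lemma exists_le_mul_exp_of_third_order_nonpos {p p' p'' p''' q q' q'' r r' : ℝ → ℝ}
    {a₂ a₁ a₀ b₂ b₁ b₀ c₁ c₀ : ℝ}
    (hp : ∀ t ∈ Ici t₀, HasDerivWithinAt p (p' t) (Ici t₀) t)
    (hp' : ∀ t ∈ Ici t₀, HasDerivWithinAt p' (p'' t) (Ici t₀) t)
    (hp'' : ∀ t ∈ Ici t₀, HasDerivWithinAt p'' (p''' t) (Ici t₀) t)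
    (hq : ∀ t ∈ Ici t₀, HasDerivWithinAt q (q' t) (Ici t₀) t)
    (hq' : ∀ t ∈ Ici t₀, HasDerivWithinAt q' (q'' t) (Ici t₀) t)
    (hr : ∀ t ∈ Ici t₀, HasDerivWithinAt r (r' t) (Ici t₀) t)
    (hp_nonneg : ∀ t ∈ Ici t₀, 0 ≤ p t) (hq_nonneg : ∀ t ∈ Ici t₀, 0 ≤ q t)
    (hr_nonneg : ∀ t ∈ Ici t₀, 0 ≤ r t)
    (ha₂ : 0 < a₂ - 3 * σ) (ha₁ : 0 < a₁ - 2 * σ * a₂ + 3 * σ ^ 2)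
    (ha₀ : 0 ≤ a₀ - σ * a₁ + σ ^ 2 * a₂ - σ ^ 3)
    (hb₂ : 0 ≤ b₂) (hb₁ : 0 < b₁ - 2 * σ * b₂) (hb₀ : 0 ≤ b₀ - σ * b₁ + σ ^ 2 * b₂)
    (hc₁ : 0 ≤ c₁) (hc₀ : 0 ≤ c₀ - σ * c₁)
    (h : ∀ t ∈ Ici t₀,
      p''' t + a₂ * p'' t + a₁ * p' t + a₀ * p t + (b₂ * q'' t + b₁ * q' t + b₀ * q t) +
        (c₁ * r' t + c₀ * r t) ≤ 0) :
    ∃ C, ∀ t ∈ Ici t₀, p t ≤ C * Real.exp (-σ * t) := by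
  -- The coefficients below are the quotients of `P`, `Q`, `R` by `s + σ`.
  let α₁ : ℝ := a₂ - σ
  let α₀ : ℝ := a₁ - σ * α₁
  let γ : ℝ := b₁ - σ * b₂
  let G : ℝ → ℝ := fun t => p'' t + α₁ * p' t + α₀ * p t + (b₂ * q' t + γ * q t) + c₁ * r t
  have hG (t : ℝ) (ht : t₀ ≤ t) : G t ≤ G t₀ * Real.exp (-σ * (t - t₀)) := by
    refine le_mul_exp_of_deriv_add_mul_nonpos (fun s hs =>
      ((((hp'' s hs).fun_add ((hp' s hs).const_mul α₁)).fun_add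
        ((hp s hs).const_mul α₀)).fun_add (((hq' s hs).const_mul b₂).fun_add
          ((hq s hs).const_mul γ))).fun_add ((hr s hs).const_mul c₁))
      (fun s hs => ?_) ht
    simp only [α₀, α₁, γ]
    linarith [h s hs, mul_nonneg ha₀ (hp_nonneg s hs), mul_nonneg hb₀ (hq_nonneg s hs),
      mul_nonneg hc₀ (hr_nonneg s hs)]
  refine exists_le_mul_exp_of_second_order_le (a₁ := α₁) (a₀ := α₀) (b₁ := b₂) (b₀ := γ)
    (K := G t₀ * Real.exp (σ * t₀)) hp hp' hq hp_nonneg hq_nonneg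
    (by linarith) (by linarith) hb₂ (by linarith) (fun t ht => ?_)
  calc p'' t + α₁ * p' t + α₀ * p t + (b₂ * q' t + γ * q t)
      ≤ G t := le_add_of_nonneg_right (mul_nonneg hc₁ (hr_nonneg t ht))
    _ ≤ G t₀ * Real.exp (-σ * (t - t₀)) := hG t ht
    _ = G t₀ * Real.exp (σ * t₀) * Real.exp (-σ * t) := by
        rw [mul_assoc, ← Real.exp_add]
        ring_nf

end DifferentialInequalities

section ThirdOrderDynamics

variable {H : Type*} [NormedAddCommGroup H] [InnerProductSpace ℝ H]

lemma eq_of_stronglyMonotone_at {U : H → H} {ρ : ℝ} (hρ : 0 < ρ) {xs z : H}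
    (hmono : ∀ x, ρ * ‖x - xs‖ ^ 2 ≤ ⟪U x, x - xs⟫_ℝ) (hz : U z = 0) : z = xs := by
  have hle : ρ * ‖z - xs‖ ^ 2 ≤ 0 := by simpa only [hz, inner_zero_left] using hmono z
  have hsq : ‖z - xs‖ ^ 2 = 0 := le_antisymm (nonpos_of_mul_nonpos_right hle hρ) (sq_nonneg _)
  exact sub_eq_zero.1 (norm_eq_zero.1 (pow_eq_zero_iff two_ne_zero |>.1 hsq))

lemma stronglyMonotone_modulus_le_lipschitz [Nontrivial H] {U : H → H} {ρ L : ℝ} {xs : H}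
    (hmono : ∀ x, ρ * ‖x - xs‖ ^ 2 ≤ ⟪U x, x - xs⟫_ℝ)
    (hLip : ∀ x, ‖U x‖ ≤ L * ‖x - xs‖) : ρ ≤ L := by
  obtain ⟨z, hz⟩ := exists_ne xs
  have hpos : 0 < ‖z - xs‖ := norm_pos_iff.2 (sub_ne_zero.2 hz)
  refine le_of_mul_le_mul_right ?_ (pow_pos hpos 2)
  calc ρ * ‖z - xs‖ ^ 2 ≤ ⟪U z, z - xs⟫_ℝ := hmono z
    _ ≤ ‖U z‖ * ‖z - xs‖ := real_inner_le_norm _ _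
    _ ≤ L * ‖z - xs‖ * ‖z - xs‖ := by gcongr; exact hLip z
    _ = L * ‖z - xs‖ ^ 2 := by ring

lemma two_mul_inner_le_mul_norm_sq_add {κ : ℝ} (hκ : 0 < κ) (u w : H) :
    2 * ⟪u, w⟫_ℝ ≤ κ / 2 * ‖u‖ ^ 2 + 2 / κ * ‖w‖ ^ 2 := by
  have hsq : 2 / κ * ‖(κ / 2) • u - w‖ ^ 2 =
      κ / 2 * ‖u‖ ^ 2 + 2 / κ * ‖w‖ ^ 2 - 2 * ⟪u, w⟫_ℝ := by
    rw [norm_sub_sq_real, norm_smul, real_inner_smul_left, mul_pow, Real.norm_eq_abs, sq_abs]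
    field_simp
    ring
  have hnonneg : 0 ≤ 2 / κ * ‖(κ / 2) • u - w‖ ^ 2 := by positivity
  linarith

lemma le_two_mul_inner_of_stronglyMonotone_add {ρ κ : ℝ} (hκ : 0 < κ) {u y w : H}
    (hmono : ρ * ‖y + w‖ ^ 2 ≤ ⟪u, y + w⟫_ℝ) (hLip : κ * ‖u‖ ^ 2 ≤ ρ * ‖y + w‖ ^ 2) :
    ρ * ‖y + w‖ ^ 2 + κ / 2 * ‖u‖ ^ 2 - 2 / κ * ‖w‖ ^ 2 ≤ 2 * ⟪u, y⟫_ℝ := by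
  rw [inner_add_right] at hmono
  linarith [two_mul_inner_le_mul_norm_sq_add hκ u w]

/-- The terms are multiples of `‖y‖²`, `‖v‖²`, `‖a‖²` and of their derivatives along a curve `y`
with successive derivatives `v`, `a`, `j`. -/
lemma energy_inequality {ρ κ β₀ β₁ β₂ l₁ l₂ : ℝ} (hκ : 0 < κ) (hβ₀ : 0 < β₀) {y v a j u : H}
    (hode : j + β₂ • a + β₁ • v + β₀ • u = 0)
    (hmono : ρ * ‖y + (l₁ • v + l₂ • a)‖ ^ 2 ≤ ⟪u, y + (l₁ • v + l₂ • a)⟫_ℝ)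
    (hLip : κ * ‖u‖ ^ 2 ≤ ρ * ‖y + (l₁ • v + l₂ • a)‖ ^ 2) :
    2 * (3 * ⟪v, a⟫_ℝ + ⟪y, j⟫_ℝ) + (β₂ + β₀ * ρ * l₂) * (2 * (‖v‖ ^ 2 + ⟪y, a⟫_ℝ)) +
      (β₁ + β₀ * ρ * l₁) * (2 * ⟪y, v⟫_ℝ) + β₀ * ρ * ‖y‖ ^ 2 +
      (κ / (2 * β₀) * β₁ * (2 * (‖a‖ ^ 2 + ⟪v, j⟫_ℝ)) +
        (κ / (2 * β₀) * β₁ * β₂ - 3 - β₀ * (2 / κ - ρ) * (l₁ * l₂)) * (2 * ⟪v, a⟫_ℝ) +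
        (κ / (2 * β₀) * β₁ ^ 2 - 2 * β₂ - 2 * β₀ * ρ * l₂ - β₀ * (2 / κ - ρ) * l₁ ^ 2) *
          ‖v‖ ^ 2) +
      (κ / (2 * β₀) * β₂ * (2 * ⟪a, j⟫_ℝ) +
        (κ / (2 * β₀) * (β₂ ^ 2 - 2 * β₁) - β₀ * (2 / κ - ρ) * l₂ ^ 2) * ‖a‖ ^ 2) ≤ 0 := by
  set c : ℝ := κ / (2 * β₀) with hc
  set w : H := l₁ • v + l₂ • a with hw
  set S : H := j + β₂ • a + β₁ • v with hS
  have hSu : S = -(β₀ • u) := eq_neg_of_add_eq_zero_left hode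
  have hSy : ⟪S, y⟫_ℝ = -(β₀ * ⟪u, y⟫_ℝ) := by
    rw [hSu, inner_neg_left, real_inner_smul_left]
  have hSS : c * ‖S‖ ^ 2 = β₀ * (κ / 2 * ‖u‖ ^ 2) := by
    rw [hSu, norm_neg, norm_smul, mul_pow, Real.norm_eq_abs, sq_abs, hc]
    field_simp
  have hcompact : 2 * ⟪S, y⟫_ℝ + c * ‖S‖ ^ 2 +
      β₀ * (ρ * ‖y + w‖ ^ 2 - 2 / κ * ‖w‖ ^ 2) ≤ 0 := by
    have hu := mul_le_mul_of_nonneg_left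
      (le_two_mul_inner_of_stronglyMonotone_add hκ hmono hLip) hβ₀.le
    linarith
  have hj : 0 ≤ c * ‖j‖ ^ 2 := by positivity
  simp only [hS, hw, ← real_inner_self_eq_norm_sq, inner_add_left, inner_add_right,
    real_inner_smul_left, real_inner_smul_right] at hcompact hj ⊢
  rw [real_inner_comm y j, real_inner_comm y a, real_inner_comm y v, real_inner_comm a j,
    real_inner_comm v j, real_inner_comm v a] at hcompact
  linarith

theorem exists_norm_sq_le_mul_exp_of_third_order_ode {ρ κ β₀ β₁ β₂ l₁ l₂ t₀ σ : ℝ}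
    {y v a j u : ℝ → H} (hκ : 0 < κ) (hβ₀ : 0 < β₀)
    (hy : ∀ t ∈ Ici t₀, HasDerivWithinAt y (v t) (Ici t₀) t)
    (hv : ∀ t ∈ Ici t₀, HasDerivWithinAt v (a t) (Ici t₀) t)
    (ha : ∀ t ∈ Ici t₀, HasDerivWithinAt a (j t) (Ici t₀) t)
    (hode : ∀ t ∈ Ici t₀, j t + β₂ • a t + β₁ • v t + β₀ • u t = 0)
    (hmono : ∀ t ∈ Ici t₀, ρ * ‖y t + (l₁ • v t + l₂ • a t)‖ ^ 2 ≤
      ⟪u t, y t + (l₁ • v t + l₂ • a t)⟫_ℝ)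
    (hLip : ∀ t ∈ Ici t₀, κ * ‖u t‖ ^ 2 ≤ ρ * ‖y t + (l₁ • v t + l₂ • a t)‖ ^ 2)
    (hP₂ : 0 < β₂ + β₀ * ρ * l₂ - 3 * σ)
    (hP₁ : 0 < β₁ + β₀ * ρ * l₁ - 2 * σ * (β₂ + β₀ * ρ * l₂) + 3 * σ ^ 2)
    (hP₀ : 0 ≤ β₀ * ρ - σ * (β₁ + β₀ * ρ * l₁) + σ ^ 2 * (β₂ + β₀ * ρ * l₂) - σ ^ 3)
    (hQ₂ : 0 ≤ κ / (2 * β₀) * β₁)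
    (hQ₁ : 0 < κ / (2 * β₀) * β₁ * β₂ - 3 - β₀ * (2 / κ - ρ) * (l₁ * l₂) -
      2 * σ * (κ / (2 * β₀) * β₁))
    (hQ₀ : 0 ≤ κ / (2 * β₀) * β₁ ^ 2 - 2 * β₂ - 2 * β₀ * ρ * l₂ - β₀ * (2 / κ - ρ) * l₁ ^ 2 -
      σ * (κ / (2 * β₀) * β₁ * β₂ - 3 - β₀ * (2 / κ - ρ) * (l₁ * l₂)) +
      σ ^ 2 * (κ / (2 * β₀) * β₁))
    (hR₁ : 0 ≤ κ / (2 * β₀) * β₂)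
    (hR₀ : 0 ≤ κ / (2 * β₀) * (β₂ ^ 2 - 2 * β₁) - β₀ * (2 / κ - ρ) * l₂ ^ 2 -
      σ * (κ / (2 * β₀) * β₂)) :
    ∃ C, ∀ t ∈ Ici t₀, ‖y t‖ ^ 2 ≤ C * Real.exp (-σ * t) := by
  have hp' (t) (ht : t ∈ Ici t₀) : HasDerivWithinAt (fun s => 2 * ⟪y s, v s⟫_ℝ)
      (2 * (‖v t‖ ^ 2 + ⟪y t, a t⟫_ℝ)) (Ici t₀) t :=
    (((hy t ht).inner ℝ (hv t ht)).const_mul 2).congr_deriv (by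
      rw [real_inner_self_eq_norm_sq]; ring)
  have hp'' (t) (ht : t ∈ Ici t₀) : HasDerivWithinAt (fun s => 2 * (‖v s‖ ^ 2 + ⟪y s, a s⟫_ℝ))
      (2 * (3 * ⟪v t, a t⟫_ℝ + ⟪y t, j t⟫_ℝ)) (Ici t₀) t :=
    (((hv t ht).norm_sq.add ((hy t ht).inner ℝ (ha t ht))).const_mul 2).congr_deriv (by ring)
  have hq' (t) (ht : t ∈ Ici t₀) : HasDerivWithinAt (fun s => 2 * ⟪v s, a s⟫_ℝ)
      (2 * (‖a t‖ ^ 2 + ⟪v t, j t⟫_ℝ)) (Ici t₀) t :=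
    (((hv t ht).inner ℝ (ha t ht)).const_mul 2).congr_deriv (by
      rw [real_inner_self_eq_norm_sq]; ring)
  exact exists_le_mul_exp_of_third_order_nonpos
    (fun t ht => (hy t ht).norm_sq) hp' hp'' (fun t ht => (hv t ht).norm_sq) hq'
    (fun t ht => (ha t ht).norm_sq)
    (fun t _ => sq_nonneg ‖y t‖) (fun t _ => sq_nonneg ‖v t‖) (fun t _ => sq_nonneg ‖a t‖)
    hP₂ hP₁ hP₀ hQ₂ hQ₁ hQ₀ hR₁ hR₀
    (fun t ht => energy_inequality hκ hβ₀ (hode t ht) (hmono t ht) (hLip t ht))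

theorem stmt9_general {U : H → H} {ρ Lu κ : ℝ} (hρ : 0 < ρ) (hLu : 0 < Lu) (hκ : κ = ρ / Lu ^ 2)
    {xs : H} (hLip : ∀ x, ‖U x‖ ≤ Lu * ‖x - xs‖)
    (hmono : ∀ x, ρ * ‖x - xs‖ ^ 2 ≤ ⟪U x, x - xs⟫_ℝ)
    {β0 β1 β2 lam1 lam2 : ℝ} (hβ0 : 0 < β0) (hβ2 : 6 < β2)
    (hlam1l : 0 ≤ lam1)
    (hlam1u : lam1 < (-8 + ρ * β0 - 2 * β1 + 4 * β2) / (2 * ρ * β0))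
    (hlam12 : β0 * (2 / κ - ρ) * lam1 ^ 2 + 2 * β0 * ρ * lam2 <
      κ * β1 / (2 * β0) * (4 + β1 - 2 * β2) - 2 * (β2 - 3))
    (hlam2l : 0 ≤ lam2)
    (hlam2u : lam2 < (12 + β1 - 4 * β2) / (4 * ρ * β0))
    (hlam12' : β0 * (2 / κ - ρ) * (lam1 * lam2) < κ * β1 / (2 * β0) * (β2 - 4) - 3)
    (hlam22 : β0 * (2 / κ - ρ) * lam2 ^ 2 < κ / (2 * β0) * (β2 ^ 2 - 2 * β2 - 2 * β1))
    {t0 : ℝ} :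
    (∀ z, U z = 0 → z = xs) ∧
      ∀ x v a j : ℝ → H,
        (∀ t ∈ Ici t0, HasDerivWithinAt x (v t) (Ici t0) t) →
        (∀ t ∈ Ici t0, HasDerivWithinAt v (a t) (Ici t0) t) →
        (∀ t ∈ Ici t0, HasDerivWithinAt a (j t) (Ici t0) t) →
        (∀ t ∈ Ici t0,
          j t + β2 • a t + β1 • v t + β0 • U (x t + lam1 • v t + lam2 • a t) = 0) →
        ∃ C : ℝ, 0 < C ∧ ∀ t ∈ Ici t0, ‖x t - xs‖ ^ 2 ≤ C * Real.exp (-2 * t) := by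
  refine ⟨fun z hz => eq_of_stronglyMonotone_at hρ hmono hz, fun x v a j hx hv ha hode => ?_⟩
  rcases subsingleton_or_nontrivial H with _ | _
  · exact ⟨1, one_pos, fun t _ => by simp [Subsingleton.elim (x t) xs, Real.exp_nonneg]⟩
  have hκ_pos : 0 < κ := hκ ▸ by positivity
  have hρκ : ρ * κ ≤ 1 := by
    rw [hκ, mul_div_assoc', ← sq, ← div_pow]
    have hρLu : ρ ≤ Lu := stronglyMonotone_modulus_le_lipschitz hmono hLip
    exact pow_le_one₀ (by positivity) ((div_le_one hLu).2 hρLu)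
  have hD : 0 ≤ β0 * (2 / κ - ρ) * (lam1 * lam2) := by
    have hρ_le : ρ ≤ 2 / κ := by rw [le_div_iff₀ hκ_pos]; linarith
    exact mul_nonneg (mul_nonneg hβ0.le (sub_nonneg.2 hρ_le)) (mul_nonneg hlam1l hlam2l)
  have hcoco (z : H) : κ * ‖U z‖ ^ 2 ≤ ρ * ‖z - xs‖ ^ 2 := calc
    κ * ‖U z‖ ^ 2 ≤ κ * (Lu * ‖z - xs‖) ^ 2 := by gcongr; exact hLip z
    _ = ρ * ‖z - xs‖ ^ 2 := by rw [hκ]; field_simp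
  have hshift (t : ℝ) : x t + lam1 • v t + lam2 • a t - xs =
      x t - xs + (lam1 • v t + lam2 • a t) := by abel
  rw [lt_div_iff₀ (by positivity)] at hlam1u hlam2u
  rw [mul_div_right_comm] at hlam12 hlam12'
  have hl₁ : 0 ≤ β0 * ρ * lam1 := by positivity
  have hl₂ : 0 ≤ β0 * ρ * lam2 := by positivity
  have hβ1 : 0 < β1 := by linarith
  have hc : 0 < κ / (2 * β0) := by positivity
  obtain ⟨C, hC⟩ := exists_norm_sq_le_mul_exp_of_third_order_ode (σ := 2) hκ_pos hβ0
    (fun t ht => (hx t ht).sub_const xs) hv ha hode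
    (fun t _ => hshift t ▸ hmono _) (fun t _ => hshift t ▸ hcoco _)
    (hP₂ := by linarith) (hP₁ := by linarith) (hP₀ := by linarith)
    (hQ₂ := mul_nonneg hc.le hβ1.le) (hQ₁ := by linarith) (hQ₀ := by linarith)
    (hR₁ := mul_nonneg hc.le (by linarith)) (hR₀ := by linarith)
  exact ⟨max C 1, by positivity, fun t ht => (hC t ht).trans (by gcongr; exact le_max_left C 1)⟩

end ThirdOrderDynamics

theorem stmt9
    {H : Type*} [NormedAddCommGroup H] [InnerProductSpace ℝ H] [CompleteSpace H]
    (U : H → H) (ρ Lu κ : ℝ) (hρ : 0 < ρ) (hLu : 0 < Lu) (hκ : κ = ρ / Lu ^ 2)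
    (hLip : ∀ x y : H, ‖U x - U y‖ ≤ Lu * ‖x - y‖)
    (hmono : ∀ (x xs : H), U xs = 0 → ρ * ‖x - xs‖ ^ 2 ≤ ⟪U x, x - xs⟫_ℝ)
    (hZ : ∃ z : H, U z = 0)
    (β0 β1 β2 lam1 lam2 : ℝ)
    (hβ2 : β2 > max (4 + 12 / (ρ * κ)) (max 6 (16 / (ρ * κ))))
    (hβ1l : max (4 * (β2 - 3)) (8 / (ρ * κ) * (β2 - 3)) < β1)
    (hβ1u : β1 < β2 * (β2 - 2) / 2)
    (hβ0l : 2 / ρ * (-2 * β2 + β1 + 4) < β0)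
    (hβ0u : β0 < κ * β1 / 2 *
      min ((-2 * β2 + β1 + 4) / (2 * (β2 - 3))) ((β2 - 4) / 3))
    (hlam1l : 0 ≤ lam1)
    (hlam1u : lam1 < (-8 + ρ * β0 - 2 * β1 + 4 * β2) / (2 * ρ * β0))
    (hlam12 : β0 * (2 / κ - ρ) * lam1 ^ 2 + 2 * β0 * ρ * lam2 <
      κ * β1 / (2 * β0) * (4 + β1 - 2 * β2) - 2 * (β2 - 3))
    (hlam2l : 0 ≤ lam2)
    (hlam2u : lam2 < (12 + β1 - 4 * β2) / (4 * ρ * β0))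
    (hlam12' : β0 * (2 / κ - ρ) * (lam1 * lam2) < κ * β1 / (2 * β0) * (β2 - 4) - 3)
    (hlam22 : β0 * (2 / κ - ρ) * lam2 ^ 2 < κ / (2 * β0) * (β2 ^ 2 - 2 * β2 - 2 * β1))
    (t0 : ℝ) :
    ∃ xs : H, U xs = 0 ∧ (∀ z : H, U z = 0 → z = xs) ∧
      ∀ x : ℝ → H,
        (∀ t, t0 ≤ t → DifferentiableAt ℝ x t) →
        (∀ t, t0 ≤ t → DifferentiableAt ℝ (deriv x) t) →
        (∀ t, t0 ≤ t → DifferentiableAt ℝ (deriv (deriv x)) t) →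
        (∀ t, t0 ≤ t →
          deriv (deriv (deriv x)) t + β2 • deriv (deriv x) t + β1 • deriv x t +
            β0 • U (x t + lam1 • deriv x t + lam2 • deriv (deriv x) t) = 0) →
        ∃ C : ℝ, 0 < C ∧ ∀ t, t0 ≤ t → ‖x t - xs‖ ^ 2 ≤ C * Real.exp (-2 * t) := by
  have hβ2_six : 6 < β2 := ((le_max_left _ _).trans (le_max_right _ _)).trans_lt hβ2
  have hβ1_lower : 4 * (β2 - 3) < β1 := (le_max_left _ _).trans_lt hβ1l
  have hβ0 : 0 < β0 := (mul_pos (by positivity) (by linarith)).trans hβ0l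
  obtain ⟨xs, hxs⟩ := hZ
  obtain ⟨huniq, hdecay⟩ := stmt9_general hρ hLu hκ (fun x => by simpa [hxs] using hLip x xs)
    (fun x => hmono x xs hxs) hβ0 hβ2_six hlam1l hlam1u hlam12 hlam2l hlam2u hlam12' hlam22
  exact ⟨xs, hxs, huniq, fun x hx hx' hx'' hode => hdecay x _ _ _
    (fun t ht => (hx t ht).hasDerivAt.hasDerivWithinAt)
    (fun t ht => (hx' t ht).hasDerivAt.hasDerivWithinAt)
    (fun t ht => (hx'' t ht).hasDerivAt.hasDerivWithinAt) hode⟩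
end
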